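/- For every fixed positive integer s, there are, up to isomorphism, only finitely many Gorenstein polytopes of degree s (of arbitrary dimension) that are not lattice pyramids. -/

import Mathlib

open Pointwise

/-- A point of `ℝ^d` is a lattice point if all its coordinates are integers. -/
def IsLatticePt {d : ℕ} (x : Fin d → ℝ) : Prop := ∀ i, ∃ z : ℤ, x i = (z : ℝ)

/-- A lattice polytope is the (non-empty) convex hull of finitely many lattice points. -/
def IsLatticePolytope {d : ℕ} (P : Set (Fin d → ℝ)) : Prop :=
  ∃ V : Finset (Fin d → ℝ), V.Nonempty ∧ (∀ v ∈ V, IsLatticePt v) ∧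
    P = convexHull ℝ (V : Set (Fin d → ℝ))

/-- The dimension of a polytope: the dimension of the direction of its affine hull. -/
noncomputable def polyDim {d : ℕ} (P : Set (Fin d → ℝ)) : ℕ :=
  Module.finrank ℝ (affineSpan ℝ P).direction

/-- A polytope is hollow if its relative interior contains no lattice point. -/
def IsHollow {d : ℕ} (P : Set (Fin d → ℝ)) : Prop :=
  ∀ x ∈ intrinsicInterior ℝ P, ¬ IsLatticePt x

/-- A facet of `P`: a non-empty exposed face of dimension `dim P - 1`. -/
def IsFacet {d : ℕ} (P F : Set (Fin d → ℝ)) : Prop :=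
  IsExposed ℝ P F ∧ F.Nonempty ∧ polyDim F + 1 = polyDim P

/-- An affine functional is integral on `P` if it takes integer values on all
lattice points of the affine hull of `P`. -/
def IsIntegralOn {d : ℕ} (P : Set (Fin d → ℝ)) (u : (Fin d → ℝ) →ᵃ[ℝ] ℝ) : Prop :=
  ∀ y ∈ affineSpan ℝ P, IsLatticePt y → ∃ z : ℤ, u y = (z : ℝ)

/-- `P` is reflexive: there is a lattice point `x` in the relative interior of `P`
such that every facet of `P` has lattice distance one from `x`, i.e. for every facet `F`
there is an integral affine functional that is constant on `F` and exceeds its value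
at `x` by exactly `1`. -/
def IsReflexivePolytope {d : ℕ} (P : Set (Fin d → ℝ)) : Prop :=
  ∃ x ∈ intrinsicInterior ℝ P, IsLatticePt x ∧
    ∀ F : Set (Fin d → ℝ), IsFacet P F →
      ∃ u : (Fin d → ℝ) →ᵃ[ℝ] ℝ, IsIntegralOn P u ∧ ∀ f ∈ F, u f = u x + 1

/-- `P` is Gorenstein if some positive integer multiple `r • P` is reflexive. -/
def IsGorenstein {d : ℕ} (P : Set (Fin d → ℝ)) : Prop :=
  ∃ r : ℕ, 0 < r ∧ IsReflexivePolytope ((r : ℝ) • P)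

/-- `P` is Gorenstein of codegree `r` if `r • P` is reflexive (`r` positive). -/
def IsGorensteinOfCodeg {d : ℕ} (P : Set (Fin d → ℝ)) (r : ℕ) : Prop :=
  0 < r ∧ IsReflexivePolytope ((r : ℝ) • P)

/-- The codegree of `P`: the smallest positive integer `r` such that `r • P` is not hollow. -/
noncomputable def polyCodeg {d : ℕ} (P : Set (Fin d → ℝ)) : ℕ :=
  sInf {r : ℕ | 0 < r ∧ ¬ IsHollow ((r : ℝ) • P)}

/-- The degree of `P`: `dim P + 1 - codeg P`. -/
noncomputable def polyDeg {d : ℕ} (P : Set (Fin d → ℝ)) : ℕ :=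
  polyDim P + 1 - polyCodeg P

/-- Unimodular equivalence of lattice polytopes: an affine map carrying `P` onto `Q`,
with an affine inverse on affine hulls, such that both maps preserve lattice points of
the affine hulls. -/
def LatticeIso {d e : ℕ} (P : Set (Fin d → ℝ)) (Q : Set (Fin e → ℝ)) : Prop :=
  ∃ (f : (Fin d → ℝ) →ᵃ[ℝ] (Fin e → ℝ)) (g : (Fin e → ℝ) →ᵃ[ℝ] (Fin d → ℝ)),
    f '' P = Q ∧ g '' Q = P ∧
    (∀ x ∈ affineSpan ℝ P, g (f x) = x) ∧ (∀ y ∈ affineSpan ℝ Q, f (g y) = y) ∧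
    (∀ x ∈ affineSpan ℝ P, IsLatticePt x → IsLatticePt (f x)) ∧
    (∀ y ∈ affineSpan ℝ Q, IsLatticePt y → IsLatticePt (g y))

/-- The lattice pyramid `conv(P' × {0}, (0,1))` over `P' ⊆ ℝ^m`. -/
def pyramidOver {m : ℕ} (P' : Set (Fin m → ℝ)) : Set (Fin (m + 1) → ℝ) :=
  convexHull ℝ ((fun x => Fin.snoc x (0 : ℝ)) '' P' ∪ {Fin.snoc (0 : Fin m → ℝ) (1 : ℝ)})

/-- `P` is a lattice pyramid if it is a single lattice point or is isomorphic to a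
lattice pyramid over a lattice polytope. -/
def IsLatticePyramid {d : ℕ} (P : Set (Fin d → ℝ)) : Prop :=
  (∃ x : Fin d → ℝ, IsLatticePt x ∧ P = {x}) ∨
  ∃ (m : ℕ) (P' : Set (Fin m → ℝ)), IsLatticePolytope P' ∧ LatticeIso P (pyramidOver P')

/-- The Cayley polytope `P_1 * ⋯ * P_l ⊆ ℝ^{n+l}` of `P_1, …, P_l ⊆ ℝ^n`:
the convex hull of the sets `P_i × {e_i}`. -/
def cayley {n l : ℕ} (P : Fin l → Set (Fin n → ℝ)) : Set (Fin (n + l) → ℝ) :=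
  convexHull ℝ (⋃ i : Fin l, (fun x => Fin.append x (Pi.single i (1 : ℝ))) '' P i)

/-- The Cayley polytope `F * G ⊆ ℝ^{n+2}` of two polytopes `F, G ⊆ ℝ^n`. -/
def cayleyTwo {n : ℕ} (F G : Set (Fin n → ℝ)) : Set (Fin (n + 2) → ℝ) :=
  convexHull ℝ
    ((fun x => Fin.append x ![(1 : ℝ), 0]) '' F ∪ (fun x => Fin.append x ![(0 : ℝ), 1]) '' G)

/-- `P` is a Cayley join of `F` and `G` if `P ≅ F * G` and `dim F + dim G = dim P - 1`. -/
def IsCayleyJoin {d n : ℕ} (P : Set (Fin d → ℝ)) (F G : Set (Fin n → ℝ)) : Prop :=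
  LatticeIso P (cayleyTwo F G) ∧ polyDim F + polyDim G + 1 = polyDim P

/-- `P` is reducible with factors `F` and `G`: a Cayley join with
`codeg F + codeg G = codeg P`. -/
def IsReducibleWith {d n : ℕ} (P : Set (Fin d → ℝ)) (F G : Set (Fin n → ℝ)) : Prop :=
  IsCayleyJoin P F G ∧ polyCodeg F + polyCodeg G = polyCodeg P

/-- `P` is reducible: it is a single lattice point (by convention) or is reducible
with some factors `F` and `G` which are lattice polytopes. -/
def IsReducible {d : ℕ} (P : Set (Fin d → ℝ)) : Prop :=
  (∃ x : Fin d → ℝ, IsLatticePt x ∧ P = {x}) ∨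
  ∃ (n : ℕ) (F G : Set (Fin n → ℝ)), IsLatticePolytope F ∧ IsLatticePolytope G ∧
    IsReducibleWith P F G

/-- `P` is a Cayley polytope: a single lattice point, or isomorphic to a Cayley polytope
of `l > 1` lattice polytopes. -/
def IsCayleyPolytope {d : ℕ} (P : Set (Fin d → ℝ)) : Prop :=
  (∃ x : Fin d → ℝ, IsLatticePt x ∧ P = {x}) ∨
  ∃ (n l : ℕ) (Q : Fin l → Set (Fin n → ℝ)), 1 < l ∧ (∀ i, IsLatticePolytope (Q i)) ∧
    LatticeIso P (cayley Q)

/-- `P` is IDP if for every `k ≥ 2` every lattice point of `k • P` is a sum of `k`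
lattice points of `P`. -/
def IsIDP {d : ℕ} (P : Set (Fin d → ℝ)) : Prop :=
  ∀ k : ℕ, 2 ≤ k → ∀ x : Fin d → ℝ, IsLatticePt x → x ∈ (k : ℝ) • P →
    ∃ p : Fin k → (Fin d → ℝ), (∀ i, p i ∈ P ∧ IsLatticePt (p i)) ∧ x = ∑ i, p i

/-- The standard simplex `Δ_s = conv(0, e_1, …, e_s) ⊆ ℝ^s`. -/
def stdSimplexLP (s : ℕ) : Set (Fin s → ℝ) :=
  convexHull ℝ (insert 0 (Set.range fun i : Fin s => Pi.single i (1 : ℝ)))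

/-- The product of `F ⊆ ℝ^m` and `G ⊆ ℝ^n` inside `ℝ^{m+n}`. -/
def prodPoly {m n : ℕ} (F : Set (Fin m → ℝ)) (G : Set (Fin n → ℝ)) : Set (Fin (m + n) → ℝ) :=
  (fun p : (Fin m → ℝ) × (Fin n → ℝ) => Fin.append p.1 p.2) '' (F ×ˢ G)

/-- The free join `conv(F × 0 × {0} ∪ 0 × G × {1}) ⊆ ℝ^m × ℝ^n × ℝ`. -/
def freeJoin {m n : ℕ} (F : Set (Fin m → ℝ)) (G : Set (Fin n → ℝ)) :
    Set (Fin (m + n + 1) → ℝ) :=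
  convexHull ℝ
    ((fun x => Fin.snoc (Fin.append x (0 : Fin n → ℝ)) (0 : ℝ)) '' F ∪
     (fun y => Fin.snoc (Fin.append (0 : Fin m → ℝ) y) (1 : ℝ)) '' G)

/-
Let `P` be a Gorenstein polytope of degree `s` and codegree `r`. The functionals vanishing on its
facets, scaled to be primitive, pair with the vertices to a matrix `A` of natural numbers with a
symmetric structure: positive combinations `m` of the rows and `l` of the columns give the constant
vector `1`, and both have total weight `r`. The rank of `A` is at most `dim P + 1 ≤ r + s`.

The codegree is at most `11 * s`: by Carathéodory, `m` may be replaced by a weighting `m'` supported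
on linearly independent rows, and comparing `-m'` rounded to integers with `r` shows that all but
`O(s)` of its weights are `1`. The rows and columns of weight `1` are matched by entries `1`. As `P`
is not a pyramid, no row is a unit vector, so every matched row meets a second column, and the
resulting differences of columns force the rank above `r + s` if `r > 11 * s`.

The entries of `A` are then bounded: a weighting on linearly independent rows is determined by its
total weight `r`, and by simultaneous approximation and compactness the weights of such rigid
weightings are bounded below. So there are finitely many matrices `A`, up to repeated rows and
columns. Finally `A` and the values of the functionals on finitely many bounded representatives of
the lattice modulo differences of vertices determine `P` up to isomorphism.
-/

section RigidWeights

open Filter Topology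

theorem exists_forall_abs_nat_mul_sub_int_lt {ι : Type*} [Finite ι] (p : ι → ℝ) {η : ℝ}
    (hη : 0 < η) : ∃ j : ℕ, 0 < j ∧ ∃ b : ι → ℤ, ∀ i, |j * p i - b i| < η := by
  cases nonempty_fintype ι
  have hcluster := mapClusterPt_zero_atTop_nsmul fun i => (p i : UnitAddCircle)
  obtain ⟨j, hj, hjη⟩ :=
    (hcluster.frequently (Metric.ball_mem_nhds 0 hη)).and_eventually (eventually_gt_atTop 0)
      |>.exists.imp fun _ h => h.symm
  refine ⟨j, hj, fun i => round (j * p i), fun i => ?_⟩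
  rw [← UnitAddCircle.norm_eq]
  have hi := (norm_le_pi_norm _ i).trans_lt (mem_ball_zero_iff.1 hjη)
  simpa using hi

variable {ι : Type*} [Fintype ι] {r : ℕ}

theorem exists_recurrence_of_sum_eq_natCast {p : ι → ℝ} (hsum : ∑ i, p i = r) :
    ∃ j : ℕ, 0 < j ∧ ∃ b : ι → ℤ, (∀ i, p i = 0 → b i = 0) ∧
      (∀ i, 0 < p i → 0 < (j + 1) * p i - b i) ∧ ∑ i, (b i : ℝ) = j * r := by
  obtain ⟨ε, hε, hεp⟩ :=
    Pi.exists_forall_pos_add_lt (x := 0) (y := fun i => if 0 < p i then p i else 1)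
      (fun i => by dsimp; split_ifs <;> linarith)
  have hcard : (0 : ℝ) < Fintype.card ι + 1 := by positivity
  obtain ⟨j, hj, b, hb⟩ :=
    exists_forall_abs_nat_mul_sub_int_lt p (lt_min hε (inv_pos.2 hcard))
  have hbε i := abs_lt.1 ((hb i).trans_le (min_le_left _ _))
  have hbcard i := (hb i).trans_le (min_le_right _ _)
  refine ⟨j, hj, b, fun i hi => ?_, fun i hi => ?_, ?_⟩
  · have hb1 : |(b i : ℝ)| < 1 := by
      have := hbcard i
      rw [hi, mul_zero, zero_sub, abs_neg] at this
      exact this.trans_le (inv_le_one_of_one_le₀ (by simp))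
    exact Int.abs_lt_one_iff.1 (mod_cast hb1)
  · have := hεp i
    simp only [Pi.zero_apply, zero_add, if_pos hi] at this
    linarith [(hbε i).1]
  · have hlt : |∑ i, (j * p i - b i)| < 1 := by
      calc |∑ i, (j * p i - b i)| ≤ ∑ i, |j * p i - b i| := Finset.abs_sum_le_sum_abs _ _
        _ ≤ ∑ _i : ι, (Fintype.card ι + 1 : ℝ)⁻¹ := Finset.sum_le_sum fun i _ => (hbcard i).le
        _ = Fintype.card ι / (Fintype.card ι + 1) := by simp [div_eq_mul_inv]
        _ < 1 := by rw [div_lt_one hcard]; linarith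
    rw [Finset.sum_sub_distrib, ← Finset.mul_sum, hsum] at hlt
    have : (j * r - ∑ i, b i : ℤ) = 0 := Int.abs_lt_one_iff.1 (mod_cast hlt)
    exact_mod_cast (sub_eq_zero.1 this).symm

/-- A positive weight vector of total weight `r` is rigid if it is the only positive vector of
total weight `r` among the integer translates of its integer multiples. Extremal solutions of
`∑ u, m u * A u v = 1` restrict to rigid weights on their support; rigidity is what keeps their
entries away from `0`. -/
structure IsRigid (r : ℕ) (μ : ι → ℝ) : Prop where
  pos : ∀ i, 0 < μ i
  sum_eq : ∑ i, μ i = r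
  eq_of_sum_eq : ∀ (j : ℤ) (b : ι → ℤ), (∀ i, 0 < j * μ i - b i) →
    ∑ i, (j * μ i - b i) = r → ∀ i, j * μ i - b i = μ i

theorem IsRigid.comp_equiv {κ : Type*} [Fintype κ] {μ : ι → ℝ} (hμ : IsRigid r μ) (e : κ ≃ ι) :
    IsRigid r (μ ∘ e) where
  pos i := hμ.pos (e i)
  sum_eq := (e.sum_comp μ).trans hμ.sum_eq
  eq_of_sum_eq j b hpos hsum i := by
    have := hμ.eq_of_sum_eq j (b ∘ e.symm) (fun i => by simpa using hpos (e.symm i))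
      (by rw [← hsum, ← e.sum_comp]; simp) (e i)
    simpa using this

theorem nonneg_and_sum_eq_of_mem_closure_isRigid {p : ι → ℝ}
    (hp : p ∈ closure {μ | IsRigid r μ}) : 0 ≤ p ∧ ∑ i, p i = r := by
  have hclosed : IsClosed {μ : ι → ℝ | 0 ≤ μ ∧ ∑ i, μ i = r} :=
    isClosed_Ici.inter (isClosed_eq (by fun_prop) continuous_const)
  have hsub : {μ : ι → ℝ | IsRigid r μ} ⊆ {μ | 0 ≤ μ ∧ ∑ i, μ i = r} :=
    fun μ hμ => ⟨fun i => (hμ.pos i).le, hμ.sum_eq⟩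
  exact closure_minimal hsub hclosed hp

theorem pos_of_mem_closure_isRigid {p : ι → ℝ} (hp : p ∈ closure {μ | IsRigid r μ}) (i : ι) :
    0 < p i := by
  obtain ⟨hp0, hsum⟩ := nonneg_and_sum_eq_of_mem_closure_isRigid hp
  by_contra hi
  have hi0 : p i = 0 := le_antisymm (not_lt.1 hi) (hp0 i)
  obtain ⟨j, hj, b, hb0, hbpos, hbsum⟩ := exists_recurrence_of_sum_eq_natCast hsum
  have hnear : ∀ᶠ μ : ι → ℝ in 𝓝 p, ∀ i, 0 < p i → 0 < (j + 1) * μ i - b i := by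
    refine eventually_all.2 fun i => ?_
    by_cases hpi : 0 < p i
    · have hcont : Continuous fun μ : ι → ℝ => (j + 1) * μ i - b i := by fun_prop
      exact (hcont.continuousAt.eventually (lt_mem_nhds (hbpos i hpi))).mono fun _ h _ => h
    · exact .of_forall fun _ h => absurd h hpi
  obtain ⟨μ, hμ, hμnear⟩ := ((mem_closure_iff_frequently.1 hp).and_eventually hnear).exists
  -- `(j + 1) μ - b` is again positive of total weight `r`, but differs from `μ` at `i`.
  have heq := hμ.eq_of_sum_eq (j + 1) b (fun k => ?_) ?_ i
  · have := mul_pos (Nat.cast_pos.2 hj) (hμ.pos i)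
    push_cast [hb0 i hi0] at heq
    linarith
  · rcases (hp0 k).eq_or_lt with hk | hk
    · have := mul_pos (a := (j + 1 : ℝ)) (by positivity) (hμ.pos k)
      simpa [hb0 k hk.symm] using this
    · exact_mod_cast hμnear k hk
  · rw [Finset.sum_sub_distrib, ← Finset.mul_sum, hμ.sum_eq, hbsum]
    push_cast
    ring

variable (ι r) in
theorem exists_pos_forall_isRigid_le :
    ∃ ε : ℝ, 0 < ε ∧ ∀ μ : ι → ℝ, IsRigid r μ → ∀ i, ε ≤ μ i := by
  have hsub : closure {μ : ι → ℝ | IsRigid r μ} ⊆ Set.Icc 0 fun _ => (r : ℝ) := fun p hp => by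
    obtain ⟨hp0, hsum⟩ := nonneg_and_sum_eq_of_mem_closure_isRigid hp
    exact ⟨hp0, fun i => hsum ▸ Finset.single_le_sum (fun k _ => hp0 k) (Finset.mem_univ i)⟩
  have hcompact := isCompact_Icc.of_isClosed_subset isClosed_closure hsub
  have hbound (i : ι) : ∃ δ : ℝ, 0 < δ ∧ ∀ p ∈ closure {μ : ι → ℝ | IsRigid r μ}, δ ≤ p i :=
    hcompact.exists_forall_le' (continuous_apply i).continuousOn
      fun p hp => pos_of_mem_closure_isRigid hp i
  choose δ hδ hδle using hbound
  obtain ⟨ε, hε, hεδ⟩ := Pi.exists_forall_pos_add_lt (x := 0) hδ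
  refine ⟨ε, hε, fun μ hμ i => ?_⟩
  have := hεδ i
  rw [Pi.zero_apply, zero_add] at this
  exact this.le.trans (hδle i μ (subset_closure hμ))

theorem exists_pos_forall_isRigid_le_of_card_le (n R : ℕ) :
    ∃ ε : ℝ, 0 < ε ∧ ∀ {ι : Type*} [Fintype ι] {r : ℕ} {μ : ι → ℝ}, Fintype.card ι ≤ n →
      r ≤ R → IsRigid r μ → ∀ i, ε ≤ μ i := by
  choose δ hδ hδle using fun q : Fin (n + 1) × Fin (R + 1) =>
    exists_pos_forall_isRigid_le (Fin q.1) q.2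
  obtain ⟨ε, hε, hεδ⟩ := Pi.exists_forall_pos_add_lt (x := 0) hδ
  refine ⟨ε, hε, fun {ι _ r μ} hn hR hμ i => ?_⟩
  let q : Fin (n + 1) × Fin (R + 1) := (⟨Fintype.card ι, by lia⟩, ⟨r, by lia⟩)
  have hε_le : ε ≤ δ q := by simpa using (hεδ q).le
  simpa using hε_le.trans
    (hδle q _ (hμ.comp_equiv (Fintype.equivFin ι).symm) (Fintype.equivFin ι i))

end RigidWeights

section SupportReduction

open Function

theorem exists_nonneg_sub_smul_support_ssubset {𝕜 ι : Type*} [Field 𝕜] [LinearOrder 𝕜]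
    [IsStrictOrderedRing 𝕜] [Finite ι] {k w : ι → 𝕜} (hk : 0 ≤ k)
    (hsupp : support w ⊆ support k) (hw : ∃ i, 0 < w i) :
    ∃ t : 𝕜, 0 ≤ t ∧ 0 ≤ k - t • w ∧ support (k - t • w) ⊂ support k := by
  obtain ⟨i, hi, hmin⟩ := Set.exists_min_image {i | 0 < w i} (fun i => k i / w i)
    (Set.toFinite _) hw
  have ht : 0 ≤ k i / w i := div_nonneg (hk i) hi.le
  refine ⟨k i / w i, ht, fun x => ?_, fun x hx hkx => hx ?_, fun h => ?_⟩
  · rw [Pi.zero_apply, Pi.sub_apply, Pi.smul_apply, smul_eq_mul, sub_nonneg]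
    rcases le_or_gt (w x) 0 with hx | hx
    · exact (mul_nonpos_of_nonneg_of_nonpos ht hx).trans (hk x)
    · exact (le_div_iff₀ hx).1 (hmin x hx)
  · have hwx : w x = 0 := notMem_support.1 fun hwx => hsupp hwx hkx
    simp [hkx, hwx]
  · refine h (hsupp (mem_support.2 hi.ne')) ?_
    simp [div_mul_cancel₀ _ hi.ne']

theorem linearIndepOn_iff_of_fintype {R M ι : Type*} [Ring R] [AddCommGroup M] [Module R M]
    [Fintype ι] {f : ι → M} {s : Set ι} :
    LinearIndepOn R f s ↔ ∀ c : ι → R, support c ⊆ s → ∑ i, c i • f i = 0 → c = 0 := by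
  rw [linearIndepOn_iff, ← Finsupp.equivFunOnFinite.symm.forall_congr_right]
  refine forall_congr' fun c => ?_
  rw [Finsupp.mem_supported, Finsupp.linearCombination_apply, Finsupp.sum_fintype _ _ (by simp)]
  simp [Set.subset_def, Finsupp.ext_iff, funext_iff]

theorem ncard_le_rank_of_linearIndepOn_row {𝕜 m n : Type*} [Field 𝕜] [Finite m] [Fintype n]
    {M : Matrix m n 𝕜} {s : Set m} (hs : LinearIndepOn 𝕜 M.row s) : s.ncard ≤ M.rank := by
  have := Fintype.ofFinite s
  rw [M.rank_eq_finrank_span_row, ← Nat.card_coe_set_eq, Nat.card_eq_fintype_card,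
    ← finrank_span_eq_card hs]
  exact Submodule.finrank_mono (Submodule.span_mono (Set.range_comp_subset_range _ _))

end SupportReduction

section GorensteinMatrices

open Function Matrix

variable {U V : Type*} [Fintype U] {A : Matrix U V ℕ} {r : ℕ}
  {m m' : U → ℝ} {l l' : V → ℝ}

/-- A row weighting of a matrix `A` of natural numbers consists of nonnegative weights of the rows
under which every column has total weight `1`. -/
structure IsRowWeighting (A : Matrix U V ℕ) (m : U → ℝ) : Prop where
  nonneg : ∀ u, 0 ≤ m u
  sum_mul : ∀ v, ∑ u, m u * A u v = 1

namespace IsRowWeighting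

theorem mul_nonneg (hm : IsRowWeighting A m) (u : U) (v : V) : 0 ≤ m u * A u v :=
  _root_.mul_nonneg (hm.nonneg u) (Nat.cast_nonneg _)

theorem mul_le_one (hm : IsRowWeighting A m) (u : U) (v : V) : m u * A u v ≤ 1 :=
  (Finset.single_le_sum (fun u _ => hm.mul_nonneg u v) (Finset.mem_univ u)).trans_eq
    (hm.sum_mul v)

theorem apply_le_one (hm : IsRowWeighting A m) {u : U} (hu : m u = 1) (v : V) : A u v ≤ 1 := by
  have := hm.mul_le_one u v
  rw [hu, one_mul] at this
  exact_mod_cast this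

theorem eq_of_apply_ne_zero (hm : IsRowWeighting A m) {u u' : U} {v : V} (hu : m u = 1)
    (hu' : m u' = 1) (h : A u v ≠ 0) (h' : A u' v ≠ 0) : u = u' := by
  by_contra hne
  have hle := Finset.add_le_sum (fun u _ => hm.mul_nonneg u v) (Finset.mem_univ u)
    (Finset.mem_univ u') hne
  rw [hm.sum_mul, hu, hu', one_mul, one_mul] at hle
  have : A u v + A u' v ≤ 1 := mod_cast hle
  lia

theorem exists_pos (hm : IsRowWeighting A m) (v : V) : ∃ u, 0 < m u ∧ 0 < A u v := by
  obtain ⟨u, -, hu⟩ := Finset.exists_ne_zero_of_sum_ne_zero ((hm.sum_mul v).trans_ne one_ne_zero)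
  exact ⟨u, (hm.nonneg u).lt_of_ne' (left_ne_zero_of_mul hu),
    Nat.pos_of_ne_zero (Nat.cast_ne_zero.1 (right_ne_zero_of_mul hu))⟩

theorem submatrix_eq_one {κ : Type*} [DecidableEq κ] (hm : IsRowWeighting A m) {e : κ → U}
    (he : Injective e) (hm1 : ∀ i, m (e i) = 1) {x : κ → V} (hx : ∀ i, A (e i) (x i) ≠ 0) :
    A.submatrix e x = 1 := by
  ext i j
  rcases eq_or_ne i j with rfl | hij
  · rw [submatrix_apply, one_apply_eq]
    exact le_antisymm (hm.apply_le_one (hm1 i) _) (Nat.one_le_iff_ne_zero.2 (hx i))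
  · rw [submatrix_apply, one_apply_ne hij]
    exact of_not_not fun h => hij (he (hm.eq_of_apply_ne_zero (hm1 i) (hm1 j) h (hx j)))

theorem one_le_sum_mul (hm : IsRowWeighting A m) {j : ℤ} {b : U → ℤ}
    (hnonneg : ∀ u, 0 ≤ j * m u - b u) (hpos : ∀ u, 0 < m u → 0 < j * m u - b u) (v : V) :
    1 ≤ ∑ u, (j * m u - b u) * A u v := by
  have hint : ∑ u, (j * m u - b u) * A u v = (j - ∑ u, b u * A u v : ℤ) := by
    simp only [sub_mul, Finset.sum_sub_distrib, mul_assoc, ← Finset.mul_sum, hm.sum_mul]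
    push_cast
    ring
  have hsum : 0 < ∑ u, (j * m u - b u) * A u v := by
    obtain ⟨u, hu, huv⟩ := hm.exists_pos v
    exact Finset.sum_pos' (fun u _ => _root_.mul_nonneg (hnonneg u) (Nat.cast_nonneg _))
      ⟨u, Finset.mem_univ u, mul_pos (hpos u hu) (Nat.cast_pos.2 huv)⟩
  rw [hint] at hsum ⊢
  exact_mod_cast hsum

variable [Fintype V]

theorem le_one (hm : IsRowWeighting A m) (hl : IsRowWeighting Aᵀ l) (u : U) : m u ≤ 1 := by
  obtain ⟨v, -, hv⟩ := hl.exists_pos u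
  exact (le_mul_of_one_le_right (hm.nonneg u) (Nat.one_le_cast.2 hv)).trans (hm.mul_le_one u v)

theorem sum_eq_sum_sum_mul (hl : IsRowWeighting Aᵀ l) (c : U → ℝ) :
    ∑ u, c u = ∑ v, (∑ u, c u * A u v) * l v := by
  simp_rw [Finset.sum_mul, mul_assoc]
  rw [Finset.sum_comm]
  refine Finset.sum_congr rfl fun u _ => ?_
  have := hl.sum_mul u
  simp_rw [transpose_apply, mul_comm (l _)] at this
  rw [← Finset.mul_sum, this, mul_one]

end IsRowWeighting

variable [Fintype V]

/-- The pairing matrix of a Gorenstein polytope of codegree `r`: the rows are indexed by the facets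
and the columns by the vertices, the entry is the lattice distance of the vertex from the facet.
The weights `l` write the distinguished interior point of `r • P` in terms of the vertices, and `m`
writes the height function of the cone over `P` in terms of the facet functionals. -/
structure IsGorensteinMatrix (A : Matrix U V ℕ) (r : ℕ) (m : U → ℝ) (l : V → ℝ) : Prop where
  row : IsRowWeighting A m
  row_pos : ∀ u, 0 < m u
  col : IsRowWeighting Aᵀ l
  col_pos : ∀ v, 0 < l v
  sum_col : ∑ v, l v = r

namespace IsGorensteinMatrix

theorem sum_row (hA : IsGorensteinMatrix A r m l) (hm' : IsRowWeighting A m') :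
    ∑ u, m' u = r := by
  rw [hA.col.sum_eq_sum_sum_mul m']
  simp only [hm'.sum_mul, one_mul, hA.sum_col]

theorem transpose (hA : IsGorensteinMatrix A r m l) : IsGorensteinMatrix Aᵀ r l m :=
  ⟨hA.col, hA.col_pos, hA.row, hA.row_pos, hA.sum_row hA.row⟩

theorem le_sum_of_one_le (hA : IsGorensteinMatrix A r m l) {c : U → ℝ}
    (hc : ∀ v, 1 ≤ ∑ u, c u * A u v) : r ≤ ∑ u, c u := by
  rw [hA.col.sum_eq_sum_sum_mul c, ← hA.sum_col]
  exact Finset.sum_le_sum fun v _ => le_mul_of_one_le_left (hA.col.nonneg v) (hc v)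

theorem sum_mul_eq_one_of_sum_eq (hA : IsGorensteinMatrix A r m l) {c : U → ℝ}
    (hc : ∀ v, 1 ≤ ∑ u, c u * A u v) (hsum : ∑ u, c u = r) (v : V) : ∑ u, c u * A u v = 1 := by
  rw [hA.col.sum_eq_sum_sum_mul c, ← hA.sum_col, eq_comm, Finset.sum_eq_sum_iff_of_le
    fun v _ => le_mul_of_one_le_left (hA.col.nonneg v) (hc v)] at hsum
  exact (right_eq_mul₀ (hA.col_pos v).ne').1 (hsum v (Finset.mem_univ v))

theorem two_mul_le_card_add_card (hA : IsGorensteinMatrix A r m l) (hm' : IsRowWeighting A m') :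
    2 * r ≤ {u | m' u ≠ 0}.ncard + {u | m' u = 1}.ncard := by
  classical
  -- With `0 ≤ m' ≤ 1` this is the translate `⌈m'⌉ + ⌊m'⌋ - m'` of `-m'`.
  let b (u : U) : ℤ := -((if m' u ≠ 0 then 1 else 0) + if m' u = 1 then 1 else 0)
  have hle := hA.le_sum_of_one_le (hm'.one_le_sum_mul (j := -1) (b := b) ?_ ?_)
  · simp only [b, Finset.sum_sub_distrib, ← Finset.mul_sum, hA.sum_row hm'] at hle
    push_cast [Finset.sum_neg_distrib, Finset.sum_add_distrib, Finset.sum_boole] at hle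
    rw [Set.ncard_eq_toFinset_card', Set.ncard_eq_toFinset_card', Set.toFinset_ofPred,
      Set.toFinset_ofPred, ← Nat.cast_le (α := ℝ)]
    push_cast
    linarith
  all_goals
    intro u
    have := hm'.le_one hA.col u
    have := hm'.nonneg u
    simp only [b]
    split_ifs <;> push_cast <;> grind

theorem exists_linearIndepOn_support (hA : IsGorensteinMatrix A r m l) (u₀ : U) :
    ∃ m', IsRowWeighting A m' ∧ 0 < m' u₀ ∧
      LinearIndepOn ℝ (A.map ((↑) : ℕ → ℝ)).row (support m') := by
  obtain ⟨m', ⟨hm', hu₀⟩, hmin⟩ := exists_minimalFor_of_wellFoundedLT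
    (fun m' => IsRowWeighting A m' ∧ 0 < m' u₀) support ⟨m, hA.row, hA.row_pos u₀⟩
  have haux (c : U → ℝ) (hc : support c ⊆ support m') (hcA : ∀ v, ∑ u, c u * A u v = 0)
      (hcu₀ : c u₀ ≤ 0) : c = 0 := by
    by_contra hc0
    have hsum : ∑ u, c u = 0 := by simp [hA.col.sum_eq_sum_sum_mul c, hcA]
    obtain ⟨u, -, hu⟩ := Finset.exists_pos_of_sum_zero_of_exists_nonzero c hsum
      (by simpa using Function.ne_iff.1 hc0)
    obtain ⟨t, ht, hnonneg, hssub⟩ :=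
      exists_nonneg_sub_smul_support_ssubset (k := m') hm'.nonneg hc ⟨u, hu⟩
    refine hssub.not_subset (hmin (j := m' - t • c) ⟨⟨hnonneg, fun v => ?_⟩, ?_⟩ hssub.subset)
    · simp [sub_mul, mul_assoc, ← Finset.mul_sum, hm'.sum_mul, hcA]
    · have := mul_nonpos_of_nonneg_of_nonpos ht hcu₀
      simp only [Pi.sub_apply, Pi.smul_apply, smul_eq_mul]
      linarith
  refine ⟨m', hm', hu₀, linearIndepOn_iff_of_fintype.2 fun c hc hcA => ?_⟩
  have hcA (v : V) : ∑ u, c u * A u v = 0 := by simpa using congrFun hcA v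
  rcases le_total (c u₀) 0 with h | h
  · exact haux c hc hcA h
  · exact neg_eq_zero.1 (haux (-c) (by simpa using hc) (by simp [hcA]) (by simpa using h))

theorem isRigid_support [Fintype (support m')] (hA : IsGorensteinMatrix A r m l)
    (hm' : IsRowWeighting A m') (hind : LinearIndepOn ℝ (A.map ((↑) : ℕ → ℝ)).row (support m')) :
    IsRigid r (fun u : support m' => m' u) := by
  have hsum (f : U → ℝ) (hf : support f ⊆ support m') : ∑ u : support m', f u = ∑ u, f u :=
    Fintype.sum_of_injective _ Subtype.val_injective _ _
      (fun u hu => notMem_support.1 fun h => hu ⟨⟨u, hf h⟩, rfl⟩) fun _ => rfl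
  refine ⟨fun u => (hm'.nonneg u).lt_of_ne' u.2, (hsum m' subset_rfl).trans (hA.sum_row hm'),
    fun j b hpos hb u => ?_⟩
  let b' : U → ℤ := extend Subtype.val b 0
  let y (u : U) : ℝ := j * m' u - b' u
  have hb' (u : support m') : b' u = b u := Subtype.val_injective.extend_apply b 0 u
  have hy_supp : support y ⊆ support m' := fun u hu => by
    by_contra hu'
    have : b' u = 0 := extend_apply' _ _ _ fun ⟨x, hx⟩ => hu' (hx ▸ x.2)
    simp [y, this, notMem_support.1 hu'] at hu
  have hy_pos (u : U) (hu : u ∈ support m') : 0 < y u := by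
    simpa [y, hb' ⟨u, hu⟩] using hpos ⟨u, hu⟩
  have hy_nonneg (u : U) : 0 ≤ y u := by
    by_cases hu : u ∈ support m'
    · exact (hy_pos u hu).le
    · exact (notMem_support.1 fun h => hu (hy_supp h)).ge
  have hy_sum : ∑ u, y u = r := by
    rw [← hsum y hy_supp, ← hb]
    simp only [y, hb']
  have hyA (v : V) : ∑ u, y u * A u v = 1 := hA.sum_mul_eq_one_of_sum_eq
    (hm'.one_le_sum_mul hy_nonneg fun u hu => hy_pos u hu.ne') hy_sum v
  have hzero := linearIndepOn_iff_of_fintype.1 hind (y - m')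
    ((support_sub y m').trans (Set.union_subset hy_supp subset_rfl))
    (by ext v; simp [sub_mul, hyA, hm'.sum_mul])
  have := congrFun (sub_eq_zero.1 hzero) u
  simpa only [y, hb'] using this

theorem exists_nat_forall_apply_le (n R : ℕ) : ∃ B : ℕ, ∀ {U V : Type*} [Fintype U] [Fintype V]
    {A : Matrix U V ℕ} {r : ℕ} {m : U → ℝ} {l : V → ℝ}, IsGorensteinMatrix A r m l →
      (A.map ((↑) : ℕ → ℝ)).rank ≤ n → r ≤ R → ∀ u v, A u v ≤ B := by
  obtain ⟨ε, hε, hεle⟩ := exists_pos_forall_isRigid_le_of_card_le n R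
  refine ⟨⌈ε⁻¹⌉₊, fun {U V _ _ A r m l} hA hn hR u v => ?_⟩
  obtain ⟨m', hm', hu, hind⟩ := hA.exists_linearIndepOn_support u
  have := Fintype.ofFinite (support m')
  have hcard : Fintype.card (support m') ≤ n := by
    rw [← Nat.card_eq_fintype_card]
    exact (ncard_le_rank_of_linearIndepOn_row hind).trans hn
  have hεu : ε ≤ m' u := hεle hcard hR (hA.isRigid_support hm' hind) ⟨u, hu.ne'⟩
  have hle : ε * A u v ≤ 1 :=
    (mul_le_mul_of_nonneg_right hεu (Nat.cast_nonneg _)).trans (hm'.mul_le_one u v)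
  rw [← Nat.cast_le (α := ℝ)]
  exact ((le_inv_mul_iff₀ hε).2 hle).trans (by simpa using Nat.le_ceil ε⁻¹)

end IsGorensteinMatrix

end GorensteinMatrices

section LinearAlgebra

open Submodule Module

theorem card_le_two_mul_finrank_span {K E ι : Type*} [DivisionRing K] [AddCommGroup E] [Module K E]
    [DecidableEq ι] {d : ι → E} {A : Finset ι} (hd : ∀ i ∈ A, d i ≠ 0)
    (hB : ∀ B ⊆ A, ∑ i ∈ B, d i ≠ 0 → ∃ i ∈ B, d i ∉ span K (d '' ↑(B.erase i))) :
    A.card ≤ 2 * finrank K (span K (d '' ↑A)) := by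
  have hdrop {B : Finset ι} (hBA : B ⊆ A) (hsum : ∑ i ∈ B, d i ≠ 0) : ∃ i ∈ B,
      finrank K (span K (d '' ↑(B.erase i))) < finrank K (span K (d '' ↑B)) := by
    obtain ⟨i, hi, hid⟩ := hB B hBA hsum
    have hle : span K (d '' ↑(B.erase i)) ≤ span K (d '' ↑B) :=
      span_mono (Set.image_mono (Finset.coe_subset.2 (Finset.erase_subset i B)))
    have := FiniteDimensional.span_of_finite K (B.finite_toSet.image d)
    exact ⟨i, hi, finrank_lt_finrank_of_lt
      (hle.lt_of_ne fun h => hid (h ▸ subset_span (Set.mem_image_of_mem d hi)))⟩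
  induction A using Finset.strongInduction with
  | H A ih =>
    have hih {B : Finset ι} (hBA : B ⊂ A) : B.card ≤ 2 * finrank K (span K (d '' ↑B)) :=
      ih B hBA (fun i hi => hd i (hBA.1 hi)) (fun C hC => hB C (hC.trans hBA.1))
        fun hC => hdrop (hC.trans hBA.1)
    by_cases hsum : ∑ i ∈ A, d i = 0
    · rcases A.eq_empty_or_nonempty with rfl | ⟨i, hi⟩
      · simp
      have hsum' : ∑ x ∈ A.erase i, d x ≠ 0 := fun h =>
        hd i hi (by rwa [← Finset.add_sum_erase _ _ hi, h, add_zero] at hsum)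
      obtain ⟨j, hj, hlt⟩ := hdrop (Finset.erase_subset i A) hsum'
      have := hih ((Finset.erase_subset j _).trans_ssubset (Finset.erase_ssubset hi))
      have hle : finrank K (span K (d '' ↑(A.erase i))) ≤ finrank K (span K (d '' ↑A)) := by
        have := FiniteDimensional.span_of_finite K (A.finite_toSet.image d)
        exact finrank_mono
          (span_mono (Set.image_mono (Finset.coe_subset.2 (Finset.erase_subset i A))))
      have := Finset.card_erase_add_one hi
      have := Finset.card_erase_add_one hj
      lia
    · obtain ⟨j, hj, hlt⟩ := hdrop subset_rfl hsum
      have := hih (Finset.erase_ssubset hj)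
      have := Finset.card_erase_add_one hj
      lia

theorem finrank_map_add_finrank_le {K E F : Type*} [DivisionRing K] [AddCommGroup E] [Module K E]
    [AddCommGroup F] [Module K F] {S D : Submodule K E} [FiniteDimensional K S] (hDS : D ≤ S)
    {f : E →ₗ[K] F} (hDf : D ≤ LinearMap.ker f) :
    finrank K (S.map f) + finrank K D ≤ finrank K S := by
  rw [← LinearMap.range_domRestrict, ← (f.domRestrict S).finrank_range_add_finrank_ker,
    ← (comapSubtypeEquivOfLe hDS).finrank_eq]
  refine Nat.add_le_add_left (finrank_mono fun x hx => ?_) _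
  exact hDf hx

theorem card_add_finrank_span_col_sub_le_rank {K m n κ : Type*} [Field K] [Finite m] [Fintype n]
    [Fintype κ] [DecidableEq κ] {M : Matrix m n K} {e : κ → m} {v w : κ → n}
    (hv : M.submatrix e v = 1) (hw : M.submatrix e w = 1) :
    Fintype.card κ + finrank K (span K (Set.range fun i => M.col (v i) - M.col (w i))) ≤
      M.rank := by
  let f : (m → K) →ₗ[K] κ → K := LinearMap.funLeft K K e
  have hf {x : κ → n} (hx : M.submatrix e x = 1) (i : κ) : f (M.col (x i)) = Pi.single i 1 := by
    ext j
    simpa [f, Matrix.one_apply, Pi.single_apply] using congrFun₂ hx j i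
  have hmap : (span K (Set.range M.col)).map f = ⊤ := by
    rw [eq_top_iff, ← (Pi.basisFun K κ).span_eq, span_le]
    rintro _ ⟨i, rfl⟩
    rw [Pi.basisFun_apply, ← hf hw i]
    exact mem_map_of_mem (subset_span ⟨w i, rfl⟩)
  have hsub : span K (Set.range fun i => M.col (v i) - M.col (w i)) ≤ span K (Set.range M.col) := by
    rw [span_le]
    rintro _ ⟨i, rfl⟩
    exact sub_mem (subset_span ⟨v i, rfl⟩) (subset_span ⟨w i, rfl⟩)
  have hker : span K (Set.range fun i => M.col (v i) - M.col (w i)) ≤ LinearMap.ker f := by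
    rw [span_le]
    rintro _ ⟨i, rfl⟩
    simp [hf hv, hf hw]
  have := finrank_map_add_finrank_le hsub hker
  rwa [hmap, finrank_top, finrank_fintype_fun_eq_card, ← M.rank_eq_finrank_span_cols] at this

end LinearAlgebra

section DimensionBound

open Function Matrix

variable {U V : Type*} {A : Matrix U V ℕ} {r s : ℕ} {m m' : U → ℝ} {l l' : V → ℝ}

theorem IsRowWeighting.sum_apply_le_one {κ : Type*} [Fintype V]
    (hl : IsRowWeighting Aᵀ l) {w : κ → V}
    (hw : Injective w) (hlw : ∀ i, l (w i) = 1) (B : Finset κ) (u : U) :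
    ∑ i ∈ B, A u (w i) ≤ 1 := by
  have hle : ∑ v ∈ B.map ⟨w, hw⟩, l v * Aᵀ v u ≤ 1 :=
    (Finset.sum_le_univ_sum_of_nonneg fun v => hl.mul_nonneg v u).trans_eq (hl.sum_mul u)
  simp only [Finset.sum_map, Embedding.coeFn_mk, hlw, one_mul, transpose_apply] at hle
  exact_mod_cast hle

theorem IsRowWeighting.exists_sum_col_sub_neg {κ : Type*} [Fintype U]
    (hm : IsRowWeighting A m) (hpos : ∀ u, 0 < m u) {v w : κ → V} {B : Finset κ}
    (hB : ∑ i ∈ B, ((A.map ((↑) : ℕ → ℝ)).col (v i) - (A.map (↑)).col (w i)) ≠ 0) :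
    ∃ u, ∑ i ∈ B, A u (v i) < ∑ i ∈ B, A u (w i) := by
  by_contra! hle
  have hnonneg (u : U) : 0 ≤ ∑ i ∈ B, ((A u (v i) : ℝ) - A u (w i)) := by
    rw [Finset.sum_sub_distrib, sub_nonneg]
    exact_mod_cast hle u
  have hsum : ∑ u, m u * ∑ i ∈ B, ((A u (v i) : ℝ) - A u (w i)) = 0 := by
    simp_rw [Finset.mul_sum, mul_sub]
    rw [Finset.sum_comm]
    simp [hm.sum_mul]
  refine hB (funext fun u => ?_)
  have := (Finset.sum_eq_zero_iff_of_nonneg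
    fun u _ => _root_.mul_nonneg (hpos u).le (hnonneg u)).1 hsum u (Finset.mem_univ u)
  simpa using (mul_eq_zero.1 this).resolve_left (hpos u).ne'

variable [Fintype U] [Fintype V]

theorem IsRowWeighting.ncard_eq_one_le (hm : IsRowWeighting A m) (hl : IsRowWeighting Aᵀ l) :
    {u | m u = 1}.ncard ≤ {u | m u = 1 ∧ ∃ w, l w = 1 ∧ A u w ≠ 0}.ncard +
      {v | l v ≠ 0 ∧ l v ≠ 1}.ncard := by
  have hsdiff : {u | m u = 1} \ {u | m u = 1 ∧ ∃ w, l w = 1 ∧ A u w ≠ 0} =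
      {u | m u = 1 ∧ ∀ w, l w = 1 → A u w = 0} := by
    ext u
    simp +contextual
  have hle : {u | m u = 1 ∧ ∀ w, l w = 1 → A u w = 0}.ncard ≤ {v | l v ≠ 0 ∧ l v ≠ 1}.ncard := by
    choose f hf using hl.exists_pos
    refine Set.ncard_le_ncard_of_injOn f (fun u hu => ⟨(hf u).1.ne', fun h => ?_⟩) ?_
    · exact (hf u).2.ne' (hu.2 _ h)
    · exact fun u hu u' hu' h =>
        hm.eq_of_apply_ne_zero hu.1 hu'.1 (hf u).2.ne' (h ▸ (hf u').2.ne')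
  rw [← Set.ncard_sdiff_add_ncard_of_subset (s := {u | m u = 1 ∧ ∃ w, l w = 1 ∧ A u w ≠ 0})
    (t := {u | m u = 1}) (fun u hu => hu.1), hsdiff]
  lia

theorem IsRowWeighting.exists_col_sub_notMem_span {κ : Type*} [DecidableEq κ]
    (hm : IsRowWeighting A m) (hpos : ∀ u, 0 < m u) (hl : IsRowWeighting Aᵀ l) {v w : κ → V}
    (hw : Injective w) (hlw : ∀ i, l (w i) = 1) {d : κ → U → ℝ}
    (hd : d = fun i => (A.map ((↑) : ℕ → ℝ)).col (v i) - (A.map (↑)).col (w i)) {B : Finset κ}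
    (hB : ∑ i ∈ B, d i ≠ 0) : ∃ i ∈ B, d i ∉ Submodule.span ℝ (d '' ↑(B.erase i)) := by
  subst hd
  obtain ⟨u, hu⟩ := hm.exists_sum_col_sub_neg hpos hB
  have hw_le := hl.sum_apply_le_one hw hlw B u
  have hv : ∀ i ∈ B, A u (v i) = 0 := Finset.sum_eq_zero_iff.1 (by lia)
  obtain ⟨i, hi, hwi⟩ := Finset.exists_ne_zero_of_sum_ne_zero (f := fun i => A u (w i)) (s := B)
    (by lia)
  have hw_erase : ∀ k ∈ B.erase i, A u (w k) = 0 := by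
    rw [← Finset.add_sum_erase B _ hi] at hw_le
    exact Finset.sum_eq_zero_iff.1 (by lia)
  -- The coordinate `u` of `d k` vanishes for every `k` in `B` except `i`.
  refine ⟨i, hi, fun hmem => hwi ?_⟩
  have hle : Submodule.span ℝ ((fun i => (A.map ((↑) : ℕ → ℝ)).col (v i) - (A.map (↑)).col (w i)) ''
      ↑(B.erase i)) ≤ LinearMap.ker (LinearMap.proj (R := ℝ) (φ := fun _ : U => ℝ) u) := by
    rw [Submodule.span_le]
    rintro _ ⟨k, hk, rfl⟩
    simp [hw_erase k hk, hv k (Finset.mem_of_mem_erase hk)]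
  simpa [hv i hi] using hle hmem

theorem IsGorensteinMatrix.three_mul_card_le {κ : Type*} [Fintype κ]
    (hA : IsGorensteinMatrix A r m l) (hm' : IsRowWeighting A m') (hl' : IsRowWeighting Aᵀ l')
    {e : κ → U} (he : Injective e) (hme : ∀ i, m' (e i) = 1) {v w : κ → V}
    (hlw : ∀ i, l' (w i) = 1) (hv : ∀ i, A (e i) (v i) ≠ 0) (hw : ∀ i, A (e i) (w i) ≠ 0)
    (hvw : ∀ i, A.col (v i) ≠ A.col (w i)) :
    3 * Fintype.card κ ≤ 2 * (A.map ((↑) : ℕ → ℝ)).rank := by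
  classical
  have hone {x : κ → V} (hx : ∀ i, A (e i) (x i) ≠ 0) :
      (A.map ((↑) : ℕ → ℝ)).submatrix e x = 1 := by
    rw [submatrix_map, hm'.submatrix_eq_one he hme hx, Matrix.map_one _ Nat.cast_zero Nat.cast_one]
  have hw_inj : Injective w := fun i j hij => he <|
    hm'.eq_of_apply_ne_zero (hme i) (hme j) (hw i) (hij ▸ hw j)
  have hne (i : κ) : (A.map ((↑) : ℕ → ℝ)).col (v i) - (A.map (↑)).col (w i) ≠ 0 := fun h =>
    hvw i (funext fun u => by simpa [sub_eq_zero] using congrFun h u)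
  have hcard := card_le_two_mul_finrank_span (K := ℝ) (A := Finset.univ) (fun i _ => hne i)
    fun B _ hB => hA.row.exists_col_sub_notMem_span hA.row_pos hl' hw_inj hlw rfl hB
  have hrank := card_add_finrank_span_col_sub_le_rank (hone hv) (hone hw)
  rw [Finset.coe_univ, Set.image_univ, Finset.card_univ] at hcard
  lia

theorem IsGorensteinMatrix.exists_ncard_le (hA : IsGorensteinMatrix A r m l) (hr : r ≠ 0)
    (hrank : (A.map ((↑) : ℕ → ℝ)).rank ≤ r + s) :
    ∃ m', IsRowWeighting A m' ∧ r ≤ {u | m' u = 1}.ncard + s ∧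
      {u | m' u ≠ 0 ∧ m' u ≠ 1}.ncard ≤ 2 * s := by
  have hsum : ∑ u, m u ≠ 0 := by rw [hA.sum_row hA.row]; exact_mod_cast hr
  obtain ⟨u, -, -⟩ := Finset.exists_ne_zero_of_sum_ne_zero hsum
  obtain ⟨m', hm', -, hind⟩ := hA.exists_linearIndepOn_support u
  have hsupp : {u | m' u ≠ 0}.ncard ≤ r + s :=
    (ncard_le_rank_of_linearIndepOn_row hind).trans hrank
  have htwo := hA.two_mul_le_card_add_card hm'
  have hsplit : {u | m' u ≠ 0}.ncard = {u | m' u ≠ 0 ∧ m' u ≠ 1}.ncard + {u | m' u = 1}.ncard := by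
    rw [← Set.ncard_sdiff_add_ncard_of_subset (s := {u | m' u = 1}) (t := {u | m' u ≠ 0})
      fun u (hu : m' u = 1) => hu.trans_ne one_ne_zero]
    rfl
  exact ⟨m', hm', by lia, by lia⟩

theorem IsGorensteinMatrix.le_eleven_mul [DecidableEq V] (hA : IsGorensteinMatrix A r m l)
    (hrank : (A.map ((↑) : ℕ → ℝ)).rank ≤ r + s) (hcol : Injective A.col)
    (hrow : ∀ u w, A.row u ≠ Pi.single w 1) : r ≤ 11 * s := by
  classical
  rcases eq_or_ne r 0 with rfl | hr
  · exact Nat.zero_le _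
  obtain ⟨m', hm', hm'r, -⟩ := hA.exists_ncard_le hr hrank
  obtain ⟨l', hl', -, hl's⟩ := hA.transpose.exists_ncard_le hr
    (by rwa [transpose_map, rank_transpose])
  let κ := {u // m' u = 1 ∧ ∃ w, l' w = 1 ∧ A u w ≠ 0}
  choose w hlw hw using fun i : κ => i.2.2
  have hv (i : κ) : ∃ v, v ≠ w i ∧ A i v ≠ 0 := by
    by_contra! h
    refine hrow i (w i) (funext fun v => ?_)
    rcases eq_or_ne v (w i) with rfl | hvw
    · have := hm'.apply_le_one i.2.1 (w i)
      have := hw i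
      rw [row_apply, Pi.single_eq_same]
      lia
    · rw [row_apply, Pi.single_eq_of_ne hvw, h v hvw]
  choose v hvw hv using hv
  have hcard := hm'.ncard_eq_one_le hl'
  have hthree := hA.three_mul_card_le hm' hl' (e := Subtype.val) Subtype.val_injective
    (fun i : κ => i.2.1) hlw hv hw fun i => hcol.ne (hvw i)
  rw [← Nat.card_eq_fintype_card] at hthree
  change {u | m' u = 1}.ncard ≤ Nat.card κ + _ at hcard
  lia

end DimensionBound

section ElementaryVectors

open Function

variable {𝕜 ι : Type*} [Field 𝕜] [LinearOrder 𝕜]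
  {K : Submodule 𝕜 (ι → 𝕜)} {k k' : ι → 𝕜}

/-- A nonnegative elementary vector of `K` in the sense of Rockafellar: a nonzero nonnegative vector
of `K` whose support is minimal among all such vectors. If `K` consists of the values of the affine
functionals at the points of a configuration, these vectors are the equations of the facets. -/
def IsElementaryVector (K : Submodule 𝕜 (ι → 𝕜)) (k : ι → 𝕜) : Prop :=
  MinimalFor (fun x => x ∈ K ∧ 0 ≤ x ∧ x ≠ 0) support k

theorem exists_isElementaryVector_support_subset [Finite ι] (hk : k ∈ K) (hk0 : 0 ≤ k)
    (hkne : k ≠ 0) : ∃ u, IsElementaryVector K u ∧ support u ⊆ support k := by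
  obtain ⟨u, hu, hmin⟩ := exists_minimalFor_of_wellFoundedLT
    (fun x => (x ∈ K ∧ 0 ≤ x ∧ x ≠ 0) ∧ support x ⊆ support k) support
    ⟨k, ⟨hk, hk0, hkne⟩, subset_rfl⟩
  exact ⟨u, ⟨hu.1, fun x hx hxu => hmin ⟨hx, hxu.trans hu.2⟩ hxu⟩, hu.2⟩

variable [IsStrictOrderedRing 𝕜]

namespace IsElementaryVector

theorem smul (hk : IsElementaryVector K k) {t : 𝕜} (ht : 0 < t) :
    IsElementaryVector K (t • k) := by
  refine ⟨⟨K.smul_mem t hk.1.1, smul_nonneg ht.le hk.1.2.1, smul_ne_zero ht.ne' hk.1.2.2⟩, ?_⟩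
  rw [support_const_smul_of_ne_zero t k ht.ne']
  exact hk.2

variable [Finite ι]

theorem exists_eq_smul_of_pos (hk : IsElementaryVector K k) (hk' : k' ∈ K)
    (hsupp : support k' ⊆ support k) (hpos : ∃ i, 0 < k' i) : ∃ t : 𝕜, k' = t • k := by
  obtain ⟨t, -, hnonneg, hlt⟩ := exists_nonneg_sub_smul_support_ssubset hk.1.2.1 hsupp hpos
  have heq : k = t • k' := by
    by_contra hne
    exact hlt.not_subset (hk.2
      ⟨K.sub_mem hk.1.1 (K.smul_mem t hk'), hnonneg, sub_ne_zero.2 hne⟩ hlt.subset)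
  have ht : t ≠ 0 := fun h => hk.1.2.2 (by rw [heq, h, zero_smul])
  exact ⟨t⁻¹, by rw [heq, inv_smul_smul₀ ht]⟩

theorem exists_eq_smul (hk : IsElementaryVector K k) (hk' : k' ∈ K)
    (hsupp : support k' ⊆ support k) : ∃ t : 𝕜, k' = t • k := by
  by_cases hpos : ∃ i, 0 < k' i
  · exact hk.exists_eq_smul_of_pos hk' hsupp hpos
  by_cases hneg : ∃ i, 0 < (-k') i
  · obtain ⟨t, ht⟩ := hk.exists_eq_smul_of_pos (K.neg_mem hk') (by rwa [support_neg]) hneg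
    exact ⟨-t, by rw [neg_smul, ← ht, neg_neg]⟩
  · push Not at hpos hneg
    exact ⟨0, funext fun i => by simpa using (hpos i).antisymm (by simpa using hneg i)⟩

theorem exists_apply_eq_zero (hk : IsElementaryVector K k) (h1 : 1 ∈ K) {g : ι → 𝕜} (hg : g ∈ K)
    {i j : ι} (hij : g i ≠ g j) : ∃ l, k l = 0 := by
  by_contra! hne
  have hsupp (x : ι → 𝕜) : support x ⊆ support k := fun l _ => hne l
  obtain ⟨t, ht⟩ := hk.exists_eq_smul h1 (hsupp 1)
  obtain ⟨t', rfl⟩ := hk.exists_eq_smul hg (hsupp g)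
  have hi : 1 = t * k i := congrFun ht i
  have hj : 1 = t * k j := congrFun ht j
  have ht0 : t ≠ 0 := left_ne_zero_of_mul_eq_one hi.symm
  exact hij (congrArg (t' * ·) (mul_left_cancel₀ ht0 (hi.symm.trans hj)))

end IsElementaryVector

variable [Finite ι]

theorem mem_closure_isElementaryVector (hk : k ∈ K) (hk0 : 0 ≤ k) :
    k ∈ AddSubmonoid.closure {x | IsElementaryVector K x} := by
  induction hS : support k using WellFoundedLT.induction generalizing k with
  | ind S ih =>
    subst hS
    rcases eq_or_ne k 0 with rfl | hkne
    · exact zero_mem _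
    obtain ⟨u, hu, huk⟩ := exists_isElementaryVector_support_subset hk hk0 hkne
    obtain ⟨i, hi⟩ := support_nonempty_iff.2 hu.1.2.2
    obtain ⟨t, ht, hnonneg, hlt⟩ := exists_nonneg_sub_smul_support_ssubset hk0 huk
      ⟨i, (hu.1.2.1 i).lt_of_ne' hi⟩
    have ht0 : 0 < t := ht.lt_of_ne' fun h => by simp [h] at hlt
    rw [← sub_add_cancel k (t • u)]
    exact add_mem (ih _ hlt (K.sub_mem hk (K.smul_mem t hu.1.1)) hnonneg rfl)
      (AddSubmonoid.subset_closure (hu.smul ht0))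

theorem le_span_isElementaryVector (h1 : 1 ∈ K) :
    K ≤ Submodule.span 𝕜 {x | IsElementaryVector K x} := by
  have hnonneg {x : ι → 𝕜} (hx : x ∈ K) (hx0 : 0 ≤ x) :
      x ∈ Submodule.span 𝕜 {x | IsElementaryVector K x} :=
    Submodule.closure_subset_span (mem_closure_isElementaryVector hx hx0)
  intro x hx
  obtain ⟨c, hc⟩ := (Set.finite_range fun i => |x i|).bddAbove
  have hle (i : ι) : |x i| ≤ c := hc ⟨i, rfl⟩
  have hc1 : c • (1 : ι → 𝕜) ∈ K := K.smul_mem c h1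
  rw [← add_sub_cancel_right x (c • 1)]
  refine sub_mem (hnonneg (add_mem hx hc1) fun i => ?_) (hnonneg hc1 fun i => ?_)
  · simpa using neg_le_iff_add_nonneg.1 ((neg_le_neg (hle i)).trans (neg_abs_le _))
  · simpa using (abs_nonneg _).trans (hle i)

theorem exists_sum_isElementaryVector_eq_one (h1 : 1 ∈ K) :
    ∃ (U : Type) (_ : Fintype U) (k : U → ι → 𝕜), (∀ u, IsElementaryVector K (k u)) ∧
      ∑ u, k u = 1 ∧ K ≤ Submodule.span 𝕜 (Set.range k) := by
  obtain ⟨f, hf, hspan, -⟩ :=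
    Submodule.exists_fun_fin_finrank_span_eq 𝕜 {x : ι → 𝕜 | IsElementaryVector K x}
  obtain ⟨c, hc⟩ := (Set.finite_range (∑ i, f i)).bddAbove
  have hc0 : 0 < max c 1 := lt_max_of_lt_right one_pos
  have hle : (max c 1)⁻¹ • ∑ i, f i ≤ 1 := fun j => by
    rw [Pi.smul_apply, smul_eq_mul, Pi.one_apply, inv_mul_le_one₀ hc0]
    exact (hc ⟨j, rfl⟩).trans (le_max_left c 1)
  obtain ⟨l, hl, hsum⟩ := AddSubmonoid.exists_list_of_mem_closure <|
    mem_closure_isElementaryVector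
      (K.sub_mem h1 (K.smul_mem (max c 1)⁻¹ (sum_mem fun i _ => (hf i).1.1))) (sub_nonneg.2 hle)
  refine ⟨_ ⊕ Fin l.length, inferInstance, Sum.elim (fun i => (max c 1)⁻¹ • f i) l.get, ?_, ?_, ?_⟩
  · rintro (i | i)
    · exact (hf i).smul (inv_pos.2 hc0)
    · exact hl _ (l.get_mem i)
  · simp [Fintype.sum_sum_type, ← Finset.smul_sum, hsum]
  · refine ((le_span_isElementaryVector h1).trans hspan.ge).trans (Submodule.span_le.2 ?_)
    rintro _ ⟨i, rfl⟩
    rw [← smul_inv_smul₀ hc0.ne' (f i)]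
    exact Submodule.smul_mem _ _ (Submodule.subset_span ⟨Sum.inl i, rfl⟩)

end ElementaryVectors

section PointConfigurations

open Function Set

variable {V E : Type*} [AddCommGroup E] [Module ℝ E]

theorem convexHull_range_eq_image_stdSimplex [Fintype V] (q : V → E) :
    convexHull ℝ (range q) = Fintype.linearCombination ℝ q '' stdSimplex ℝ V := by
  classical
  rw [← convexHull_rangle_single_eq_stdSimplex, LinearMap.image_convexHull, ← range_comp]
  congr 2
  ext v
  simp [Fintype.linearCombination_apply_single]

theorem affineMap_sum_smul {F : Type*} [AddCommGroup F] [Module ℝ F] [Fintype V]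
    (φ : E →ᵃ[ℝ] F) (q : V → E) {w : V → ℝ} (hw : ∑ v, w v = 1) :
    φ (∑ v, w v • q v) = ∑ v, w v • φ (q v) := by
  rw [← Finset.affineCombination_eq_linear_combination _ _ _ hw,
    Finset.map_affineCombination _ _ _ hw, Finset.affineCombination_eq_linear_combination _ _ _ hw]
  rfl

theorem nonneg_of_mem_convexHull_range {q : V → E} {φ : E →ᵃ[ℝ] ℝ} (h : 0 ≤ φ ∘ q) {x : E}
    (hx : x ∈ convexHull ℝ (range q)) : 0 ≤ φ x :=
  convexHull_min (range_subset_iff.2 h) ((convex_Ici 0).affine_preimage φ) hx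

theorem exists_pos_lineMap_neg_mem_of_mem_intrinsicInterior [TopologicalSpace E]
    [IsTopologicalAddGroup E] [ContinuousSMul ℝ E] {Q : Set E} {x c : E}
    (hx : x ∈ intrinsicInterior ℝ Q) (hc : c ∈ affineSpan ℝ Q) :
    ∃ ε : ℝ, 0 < ε ∧ AffineMap.lineMap x c (-ε) ∈ Q := by
  obtain ⟨y, hy, rfl⟩ := mem_intrinsicInterior.1 hx
  let f (t : ℝ) : affineSpan ℝ Q := ⟨AffineMap.lineMap (y : E) c t, AffineMap.lineMap_mem t y.2 hc⟩
  have hf : Continuous f := AffineMap.lineMap_continuous.subtype_mk _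
  have hf0 : f 0 = y := Subtype.ext (AffineMap.lineMap_apply_zero _ _)
  have hnear : ∀ᶠ t in nhds 0, f t ∈ interior ((↑) ⁻¹' Q) :=
    hf.continuousAt.eventually (isOpen_interior.mem_nhds (hf0 ▸ hy))
  obtain ⟨δ, hδ, hball⟩ := Metric.eventually_nhds_iff.1 hnear
  have hmem : f (-(δ / 2)) ∈ interior ((↑) ⁻¹' Q) := hball <| by
    rw [dist_zero_right, norm_neg, Real.norm_of_nonneg (half_pos hδ).le]
    exact half_lt_self hδ
  exact ⟨δ / 2, half_pos hδ, interior_subset (s := Subtype.val ⁻¹' Q) hmem⟩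

theorem exists_pos_weights_of_mem_intrinsicInterior [Fintype V] [TopologicalSpace E]
    [IsTopologicalAddGroup E] [ContinuousSMul ℝ E] {q : V → E} {x : E}
    (hx : x ∈ intrinsicInterior ℝ (convexHull ℝ (range q))) :
    ∃ w : V → ℝ, (∀ v, 0 < w v) ∧ ∑ v, w v = 1 ∧ ∑ v, w v • q v = x := by
  have hne : Nonempty V := range_nonempty_iff_nonempty.1
    (convexHull_nonempty_iff.1 ⟨x, intrinsicInterior_subset hx⟩)
  have hcard : (0 : ℝ) < Fintype.card V := by exact_mod_cast Fintype.card_pos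
  have hc : Fintype.linearCombination ℝ q (fun _ => (Fintype.card V : ℝ)⁻¹) ∈
      convexHull ℝ (range q) := by
    rw [convexHull_range_eq_image_stdSimplex]
    exact mem_image_of_mem _ ⟨fun _ => (inv_pos.2 hcard).le, by simp [hcard.ne']⟩
  obtain ⟨ε, hε, hmem⟩ :=
    exists_pos_lineMap_neg_mem_of_mem_intrinsicInterior hx (subset_affineSpan ℝ _ hc)
  rw [convexHull_range_eq_image_stdSimplex] at hmem
  obtain ⟨w, ⟨hw0, hw1⟩, hw⟩ := hmem
  have hε1 : 1 + ε ≠ 0 := by positivity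
  -- `x` lies strictly between the point `∑ v, w v • q v` and the barycenter of the `q v`.
  have hx_eq : x = Fintype.linearCombination ℝ q
      ((1 + ε)⁻¹ • (w + ε • fun _ => (Fintype.card V : ℝ)⁻¹)) := by
    rw [map_smul, map_add, map_smul, hw, AffineMap.lineMap_apply_module, eq_inv_smul_iff₀ hε1]
    module
  refine ⟨_, fun v => ?_, ?_, hx_eq.symm⟩
  · have := hw0 v
    simp only [Pi.smul_apply, Pi.add_apply, smul_eq_mul]
    positivity
  · simp only [Pi.smul_apply, Pi.add_apply, smul_eq_mul, ← Finset.mul_sum, Finset.sum_add_distrib,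
      hw1]
    simp [hcard.ne', hε1]

/-- The vectors of values on the configuration `q` of the affine functionals on `E`. -/
def affineValues (q : V → E) : Submodule ℝ (V → ℝ) where
  carrier := {k | ∃ φ : E →ᵃ[ℝ] ℝ, φ ∘ q = k}
  add_mem' := by
    rintro _ _ ⟨φ, rfl⟩ ⟨ψ, rfl⟩
    exact ⟨φ + ψ, rfl⟩
  zero_mem' := ⟨0, rfl⟩
  smul_mem' := by
    rintro t _ ⟨φ, rfl⟩
    exact ⟨t • φ, rfl⟩

theorem one_mem_affineValues (q : V → E) : 1 ∈ affineValues q :=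
  ⟨AffineMap.const ℝ E 1, rfl⟩

theorem affineValues_smul (q : V → E) {t : ℝ} (ht : t ≠ 0) :
    affineValues (t • q) = affineValues q := by
  have hle (q : V → E) (t : ℝ) : affineValues (t • q) ≤ affineValues q := by
    rintro _ ⟨φ, rfl⟩
    exact ⟨φ.comp (t • LinearMap.id : E →ₗ[ℝ] E).toAffineMap, rfl⟩
  refine (hle q t).antisymm ?_
  conv_lhs => rw [← inv_smul_smul₀ ht q]
  exact hle (t • q) t⁻¹

theorem exists_mem_affineValues_apply_ne {q : V → E} {v w : V} (h : q v ≠ q w) :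
    ∃ g ∈ affineValues q, g v ≠ g w := by
  by_contra! heq
  exact h (Module.eval_apply_injective ℝ
    (LinearMap.ext fun f => heq (f ∘ q) ⟨f.toAffineMap, rfl⟩))

theorem IsElementaryVector.exists_eqOn_smul [Finite V] {q : V → E} {φ ψ : E →ᵃ[ℝ] ℝ}
    (hφ : IsElementaryVector (affineValues q) (φ ∘ q)) (hψ : ∀ v, φ (q v) = 0 → ψ (q v) = 0) :
    ∃ t : ℝ, (range q).EqOn ψ (t • φ : E →ᵃ[ℝ] ℝ) := by
  obtain ⟨t, ht⟩ := hφ.exists_eq_smul ⟨ψ, rfl⟩ fun v => mt (hψ v)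
  exact ⟨t, forall_mem_range.2 fun v => congrFun ht v⟩

end PointConfigurations

section Facets

open Function Set Module

theorem finrank_inf_ker_add_one {K E : Type*} [Field K] [AddCommGroup E] [Module K E]
    {D : Submodule K E} [FiniteDimensional K D] {f : Dual K E} (hf : ¬ D ≤ LinearMap.ker f) :
    finrank K ↑(D ⊓ LinearMap.ker f) + 1 = finrank K D := by
  have hne : f.domRestrict D ≠ 0 := fun h => hf fun x hx => LinearMap.congr_fun h ⟨x, hx⟩
  rw [← Dual.finrank_ker_add_one_of_ne_zero hne, LinearMap.ker_domRestrict,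
    ← Submodule.map_comap_subtype, Submodule.finrank_map_subtype_eq]

theorem isExposed_setOf_eq_zero {E : Type*} [AddCommGroup E] [Module ℝ E] [TopologicalSpace E]
    [IsTopologicalAddGroup E] [ContinuousSMul ℝ E] [T2Space E] [FiniteDimensional ℝ E]
    {Q : Set E} {φ : E →ᵃ[ℝ] ℝ} (hφ : ∀ y ∈ Q, 0 ≤ φ y) {x : E} (hx : x ∈ Q) (hφx : φ x = 0) :
    IsExposed ℝ Q {y ∈ Q | φ y = 0} := by
  have hlin (y : E) : φ.linear y = φ y + φ.linear x := by
    rw [← sub_eq_iff_eq_add, ← map_sub, ← vsub_eq_sub y x, φ.linearMap_vsub, hφx, vsub_eq_sub,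
      sub_zero]
  refine fun _ => ⟨-LinearMap.toContinuousLinearMap φ.linear, ?_⟩
  ext y
  refine and_congr_right fun hy => ?_
  simp only [neg_apply, LinearMap.coe_toContinuousLinearMap', neg_le_neg_iff]
  refine ⟨fun h z hz => ?_, fun h => (hφ y hy).antisymm' ?_⟩
  · rw [hlin y, hlin z, h]
    exact add_le_add_left (hφ z hz) _
  · simpa [hlin y] using h x hx

variable {V : Type*} [Finite V] {d : ℕ} {q : V → Fin d → ℝ} {φ : (Fin d → ℝ) →ᵃ[ℝ] ℝ}

theorem IsElementaryVector.vectorSpan_zeros {E : Type*} [AddCommGroup E] [Module ℝ E] {q : V → E}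
    {φ : E →ᵃ[ℝ] ℝ} (hφ : IsElementaryVector (affineValues q) (φ ∘ q)) {v₀ : V}
    (hv₀ : φ (q v₀) = 0) :
    vectorSpan ℝ {y ∈ convexHull ℝ (range q) | φ y = 0} =
      vectorSpan ℝ (range q) ⊓ LinearMap.ker φ.linear := by
  have hq (v : V) (hv : φ (q v) = 0) : q v ∈ {y ∈ convexHull ℝ (range q) | φ y = 0} :=
    ⟨subset_convexHull ℝ _ ⟨v, rfl⟩, hv⟩
  refine le_antisymm (le_inf ?_ ?_) ?_
  · rw [← direction_affineSpan ℝ (range q), ← affineSpan_convexHull, direction_affineSpan]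
    exact vectorSpan_mono ℝ fun y hy => hy.1
  · rw [vectorSpan_def, Submodule.span_le]
    rintro _ ⟨a, ha, b, hb, rfl⟩
    rw [SetLike.mem_coe, LinearMap.mem_ker, φ.linearMap_vsub, ha.2, hb.2, vsub_self]
  · rintro x ⟨hx, hφx⟩
    by_contra hxF
    obtain ⟨f, hfx, hf⟩ := Submodule.exists_le_ker_of_notMem hxF
    obtain ⟨t, ht⟩ := hφ.exists_eqOn_smul (ψ := f.toAffineMap - AffineMap.const ℝ E (f (q v₀)))
      fun v hv => by
        simpa using hf (vsub_mem_vectorSpan ℝ (hq v hv) (hq v₀ hv₀))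
    have hfx0 := AffineMap.linear_eqOn_vectorSpan ht hx
    exact hfx (by simpa [LinearMap.mem_ker.1 hφx] using hfx0)

theorem IsElementaryVector.isFacet (hφ : IsElementaryVector (affineValues q) (φ ∘ q)) {v₀ : V}
    (hv₀ : φ (q v₀) = 0) :
    IsFacet (convexHull ℝ (range q)) {y ∈ convexHull ℝ (range q) | φ y = 0} := by
  have hq (v : V) : q v ∈ convexHull ℝ (range q) := subset_convexHull ℝ _ ⟨v, rfl⟩
  refine ⟨isExposed_setOf_eq_zero (fun y => nonneg_of_mem_convexHull_range hφ.1.2.1) (hq v₀) hv₀,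
    ⟨q v₀, hq v₀, hv₀⟩, ?_⟩
  rw [polyDim, polyDim, affineSpan_convexHull, direction_affineSpan, direction_affineSpan,
    hφ.vectorSpan_zeros hv₀]
  refine finrank_inf_ker_add_one fun hle => hφ.1.2.2 (funext fun v => ?_)
  have := hle (vsub_mem_vectorSpan ℝ (mem_range_self v) (mem_range_self v₀))
  rwa [LinearMap.mem_ker, φ.linearMap_vsub, hv₀, vsub_eq_sub, sub_zero] at this

end Facets

section IntegralFunctionals

open Function Set

namespace IsLatticePt

variable {d : ℕ} {x y : Fin d → ℝ}

theorem add (hx : IsLatticePt x) (hy : IsLatticePt y) : IsLatticePt (x + y) := fun i => by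
  obtain ⟨a, ha⟩ := hx i
  obtain ⟨b, hb⟩ := hy i
  exact ⟨a + b, by rw [Pi.add_apply, ha, hb, Int.cast_add]⟩

theorem zsmul (hx : IsLatticePt x) (n : ℤ) : IsLatticePt (n • x) := fun i => by
  obtain ⟨a, ha⟩ := hx i
  exact ⟨n * a, by rw [Pi.smul_apply, ha, zsmul_eq_mul, Int.cast_mul]⟩

theorem sub (hx : IsLatticePt x) (hy : IsLatticePt y) : IsLatticePt (x - y) := by
  simpa [sub_eq_add_neg] using hx.add (hy.zsmul (-1))

theorem natCast_smul (hx : IsLatticePt x) (n : ℕ) : IsLatticePt ((n : ℝ) • x) := by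
  simpa [Nat.cast_smul_eq_nsmul] using hx.zsmul n

end IsLatticePt

variable {V : Type*} {d : ℕ} {φ ψ : (Fin d → ℝ) →ᵃ[ℝ] ℝ}

theorem exists_nat_apply_eq_of_isIntegralOn {Q : Set (Fin d → ℝ)} (hφ : IsIntegralOn Q φ)
    {x : Fin d → ℝ} (hx : IsLatticePt x) (hxQ : x ∈ Q) (h0 : 0 ≤ φ x) : ∃ n : ℕ, φ x = n := by
  obtain ⟨z, hz⟩ := hφ x (subset_affineSpan ℝ Q hxQ) hx
  lift z to ℕ using by rwa [hz, Int.cast_nonneg_iff] at h0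
  exact ⟨z, hz.trans (Int.cast_natCast z)⟩

theorem IsIntegralOn.inv_smul_comp_smul {Q : Set (Fin d → ℝ)} {r : ℕ} (hr : r ≠ 0)
    (hψ : IsIntegralOn ((r : ℝ) • Q) ψ) {c : Fin d → ℝ} (hc : IsLatticePt c)
    (hcQ : c ∈ affineSpan ℝ Q) (hψc : ψ ((r : ℝ) • c) = 0) :
    IsIntegralOn Q ((r : ℝ)⁻¹ • ψ.comp ((r : ℝ) • LinearMap.id : _ →ₗ[ℝ] _).toAffineMap) := by
  intro y hyQ hy
  have hr0 : (r : ℝ) ≠ 0 := Nat.cast_ne_zero.2 hr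
  have hmem {z : Fin d → ℝ} (hz : z ∈ affineSpan ℝ Q) :
      (r : ℝ) • z ∈ affineSpan ℝ ((r : ℝ) • Q) := by
    rwa [← AffineSubspace.smul_span, AffineSubspace.smul_mem_smul_iff₀ hr0]
  have hline : AffineMap.lineMap ((r : ℝ) • c) ((r : ℝ) • y) (r : ℝ)⁻¹ = (r : ℝ) • c + (y - c) := by
    rw [AffineMap.lineMap_apply, vsub_eq_sub, ← smul_sub, inv_smul_smul₀ hr0, vadd_eq_add, add_comm]
  obtain ⟨z, hz⟩ := hψ _ (AffineMap.lineMap_mem (r : ℝ)⁻¹ (hmem hcQ) (hmem hyQ))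
    (hline ▸ (hc.natCast_smul r).add (hy.sub hc))
  rw [AffineMap.apply_lineMap, hψc, AffineMap.lineMap_apply_module, smul_zero, zero_add] at hz
  exact ⟨z, hz⟩

theorem IsElementaryVector.exists_isIntegralOn_apply_eq_one [Finite V] {q : V → Fin d → ℝ}
    (hq : ∀ v, IsLatticePt (q v)) {x : Fin d → ℝ} (hx : x ∈ convexHull ℝ (range q))
    (hdist : ∀ F, IsFacet (convexHull ℝ (range q)) F →
      ∃ u : (Fin d → ℝ) →ᵃ[ℝ] ℝ, IsIntegralOn (convexHull ℝ (range q)) u ∧ ∀ f ∈ F, u f = u x + 1)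
    (hφ : IsElementaryVector (affineValues q) (φ ∘ q)) {v₀ : V} (hv₀ : φ (q v₀) = 0) :
    ∃ (ψ : (Fin d → ℝ) →ᵃ[ℝ] ℝ) (t : ℝ), 0 < t ∧ (∀ v, ψ (q v) = t * φ (q v)) ∧
      IsIntegralOn (convexHull ℝ (range q)) ψ ∧ ψ x = 1 := by
  have hqQ (v : V) : q v ∈ convexHull ℝ (range q) := subset_convexHull ℝ _ ⟨v, rfl⟩
  obtain ⟨u, hu, hux⟩ := hdist _ (hφ.isFacet hv₀)
  let ψ : (Fin d → ℝ) →ᵃ[ℝ] ℝ := AffineMap.const ℝ _ (u x + 1) - u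
  have hψ (y : Fin d → ℝ) : ψ y = u x + 1 - u y := rfl
  have hψx : ψ x = 1 := by rw [hψ, add_sub_cancel_left]
  obtain ⟨t, ht⟩ := hφ.exists_eqOn_smul (ψ := ψ) fun v hv => by
    rw [hψ, hux _ ⟨hqQ v, hv⟩, sub_self]
  have htx : t * φ x = 1 := by
    rw [← hψx]
    refine (AffineMap.eqOn_affineSpan ht ?_).symm
    rw [← affineSpan_convexHull]
    exact subset_affineSpan ℝ _ hx
  refine ⟨ψ, t, pos_of_mul_pos_left (htx.symm ▸ one_pos)
    (nonneg_of_mem_convexHull_range hφ.1.2.1 hx), fun v => ht ⟨v, rfl⟩, fun y hy hyl => ?_, hψx⟩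
  obtain ⟨a, ha⟩ := hu _ (subset_affineSpan ℝ _ (hqQ v₀)) (hq v₀)
  obtain ⟨b, hb⟩ := hu y hy hyl
  exact ⟨a - b, by rw [hψ, ← hux _ ⟨hqQ v₀, hv₀⟩, ha, hb, Int.cast_sub]⟩

end IntegralFunctionals

section IntegralPresentations

open Function Set Matrix Module

variable {U V : Type*} {d : ℕ} {p : V → Fin d → ℝ} {α : U → (Fin d → ℝ) →ᵃ[ℝ] ℝ}
  {A : Matrix U V ℕ}

/-- The affine functionals `α u` (the facet functionals of a Gorenstein polytope) take the values
`A u v` on the configuration `p`, are integral, and generate all affine functionals on it. -/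
structure IsIntegralPresentation [Fintype U] (p : V → Fin d → ℝ) (α : U → (Fin d → ℝ) →ᵃ[ℝ] ℝ)
    (A : Matrix U V ℕ) : Prop where
  apply_eq : ∀ u v, α u (p v) = A u v
  isIntegralOn : ∀ u, IsIntegralOn (convexHull ℝ (range p)) (α u)
  exists_sum_eq : ∀ φ : (Fin d → ℝ) →ᵃ[ℝ] ℝ, ∃ c : U → ℝ, ∀ v, φ (p v) = ∑ u, c u * A u v

theorem IsElementaryVector.exists_integral_scaling [Fintype V] (hp : ∀ v, IsLatticePt (p v))
    {v₁ v₂ : V} (hv : p v₁ ≠ p v₂) {r : ℕ} (hr : r ≠ 0) {x : Fin d → ℝ}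
    (hdist : ∀ F, IsFacet ((r : ℝ) • convexHull ℝ (range p)) F → ∃ u : (Fin d → ℝ) →ᵃ[ℝ] ℝ,
      IsIntegralOn ((r : ℝ) • convexHull ℝ (range p)) u ∧ ∀ f ∈ F, u f = u x + 1)
    {w : V → ℝ} (hw0 : ∀ v, 0 < w v) (hw1 : ∑ v, w v = 1) (hwx : ∑ v, w v • (r : ℝ) • p v = x)
    {k : V → ℝ} (hk : IsElementaryVector (affineValues p) k) :
    ∃ (α : (Fin d → ℝ) →ᵃ[ℝ] ℝ) (t : ℝ), 0 < t ∧ (∀ v, α (p v) = t * k v) ∧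
      IsIntegralOn (convexHull ℝ (range p)) α ∧ ∑ v, r * w v * α (p v) = 1 := by
  have hr0 : (0 : ℝ) < r := Nat.cast_pos.2 hr.bot_lt
  have hhull : (r : ℝ) • convexHull ℝ (range p) = convexHull ℝ (range ((r : ℝ) • p)) := by
    rw [← convexHull_smul]
    exact congrArg _ (smul_set_range (r : ℝ) p)
  obtain ⟨g, hg, hgv⟩ := exists_mem_affineValues_apply_ne hv
  obtain ⟨v₀, hv₀⟩ := hk.exists_apply_eq_zero (one_mem_affineValues p) hg hgv
  rw [← affineValues_smul p hr0.ne'] at hk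
  obtain ⟨φ, rfl⟩ := hk.1.1
  have hx : x ∈ convexHull ℝ (range ((r : ℝ) • p)) := by
    rw [convexHull_range_eq_image_stdSimplex]
    exact ⟨w, ⟨fun v => (hw0 v).le, hw1⟩, hwx⟩
  obtain ⟨ψ, t, ht, hψφ, hψ, hψx⟩ := hk.exists_isIntegralOn_apply_eq_one
    (fun v => (hp v).natCast_smul r) hx (hhull ▸ hdist) hv₀
  refine ⟨_, (r : ℝ)⁻¹ * t, by positivity, fun v => ?_,
    (hhull ▸ hψ).inv_smul_comp_smul hr (hp v₀)
      (subset_affineSpan ℝ _ (subset_convexHull ℝ _ ⟨v₀, rfl⟩)) ?_, ?_⟩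
  · rw [mul_assoc]
    exact congrArg _ (hψφ v)
  · rw [← hψx, ← hwx, affineMap_sum_smul ψ _ hw1]
    refine Finset.sum_congr rfl fun v _ => ?_
    change r * w v * ((r : ℝ)⁻¹ * ψ ((r : ℝ) • p v)) = w v * ψ ((r : ℝ) • p v)
    field_simp
  · exact (hψφ v₀).trans (mul_eq_zero_of_right t hv₀)

theorem IsReflexivePolytope.exists_isIntegralPresentation [Fintype V] (hp : ∀ v, IsLatticePt (p v))
    {v₁ v₂ : V} (hv : p v₁ ≠ p v₂) {r : ℕ} (hr : r ≠ 0)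
    (hP : IsReflexivePolytope ((r : ℝ) • convexHull ℝ (range p))) :
    ∃ (U : Type) (_ : Fintype U) (α : U → (Fin d → ℝ) →ᵃ[ℝ] ℝ) (A : Matrix U V ℕ) (m : U → ℝ)
      (l : V → ℝ), IsIntegralPresentation p α A ∧ IsGorensteinMatrix A r m l := by
  have hr0 : (0 : ℝ) < r := Nat.cast_pos.2 hr.bot_lt
  obtain ⟨x, hx, -, hdist⟩ := hP
  obtain ⟨w, hw0, hw1, hwx⟩ := exists_pos_weights_of_mem_intrinsicInterior (q := (r : ℝ) • p) <| by
    have := smul_set_range (r : ℝ) p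
    rwa [← convexHull_smul, this] at hx
  obtain ⟨U, _, k, hk, hk1, hspan⟩ :=
    exists_sum_isElementaryVector_eq_one (one_mem_affineValues p)
  choose α t ht hαk hαint hαx using
    fun u => (hk u).exists_integral_scaling hp hv hr hdist hw0 hw1 hwx
  choose A hA using fun u v => exists_nat_apply_eq_of_isIntegralOn (hαint u) (hp v)
    (subset_convexHull ℝ _ ⟨v, rfl⟩) (hαk u v ▸ mul_nonneg (ht u).le ((hk u).1.2.1 v))
  have hkA (u : U) (v : V) : k u v = (t u)⁻¹ * A u v := by
    rw [← hA, hαk, inv_mul_cancel_left₀ (ht u).ne']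
  refine ⟨U, ‹_›, α, Matrix.of A, fun u => (t u)⁻¹, fun v => r * w v, ⟨hA, hαint, fun φ => ?_⟩,
    ⟨⟨fun u => (inv_pos.2 (ht u)).le, fun v => ?_⟩, fun u => inv_pos.2 (ht u),
      ⟨fun v => (mul_pos hr0 (hw0 v)).le, fun u => ?_⟩, fun v => mul_pos hr0 (hw0 v), ?_⟩⟩
  · obtain ⟨c, hc⟩ := (Submodule.mem_span_range_iff_exists_fun ℝ).1 (hspan ⟨φ, rfl⟩)
    refine ⟨fun u => c u * (t u)⁻¹, fun v => ?_⟩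
    simpa [hkA, mul_assoc] using (congrFun hc v).symm
  · simpa [hkA] using congrFun hk1 v
  · simpa [hA] using hαx u
  · rw [← Finset.mul_sum, hw1, mul_one]

end IntegralPresentations

section RankAndSeparation

open Function Set Matrix Module

variable {U V : Type*} {d : ℕ} {p : V → Fin d → ℝ} {α : U → (Fin d → ℝ) →ᵃ[ℝ] ℝ}
  {A : Matrix U V ℕ}

theorem finrank_span_range_le_finrank_vectorSpan_add_one {K E : Type*} [Field K] [AddCommGroup E]
    [Module K E] [FiniteDimensional K E] (q : V → E) :
    finrank K (Submodule.span K (range q)) ≤ finrank K (vectorSpan K (range q)) + 1 := by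
  rcases isEmpty_or_nonempty V with hV | ⟨⟨v₀⟩⟩
  · rw [range_eq_empty q, Submodule.span_empty, finrank_bot]
    exact Nat.zero_le _
  have hle : Submodule.span K (range q) ≤ vectorSpan K (range q) ⊔ K ∙ q v₀ := by
    rw [Submodule.span_le, range_subset_iff]
    intro v
    rw [← sub_add_cancel (q v) (q v₀)]
    exact Submodule.add_mem_sup (vsub_mem_vectorSpan K (mem_range_self v) (mem_range_self v₀))
      (Submodule.mem_span_singleton_self _)
  calc finrank K (Submodule.span K (range q))
      ≤ finrank K ↑(vectorSpan K (range q) ⊔ K ∙ q v₀) := Submodule.finrank_mono hle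
    _ ≤ finrank K (vectorSpan K (range q)) + finrank K (K ∙ q v₀) :=
      Submodule.finrank_add_le_finrank_add_finrank _ _
    _ ≤ finrank K (vectorSpan K (range q)) + 1 := by
      gcongr
      exact (finrank_span_le_card {q v₀}).trans (by simp)

namespace IsIntegralPresentation

variable [Fintype U]

theorem rank_le [Fintype V] (h : IsIntegralPresentation p α A) :
    (A.map ((↑) : ℕ → ℝ)).rank ≤ polyDim (convexHull ℝ (range p)) + 1 := by
  have hcol : (A.map ((↑) : ℕ → ℝ)).col = AffineMap.pi α ∘ p := by
    ext v u
    exact (h.apply_eq u v).symm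
  rw [Matrix.rank_eq_finrank_span_cols, hcol, polyDim, affineSpan_convexHull, direction_affineSpan]
  refine (finrank_span_range_le_finrank_vectorSpan_add_one _).trans ?_
  rw [range_comp, ← AffineMap.map_vectorSpan]
  gcongr
  exact Submodule.finrank_map_le _ _

theorem col_injective (h : IsIntegralPresentation p α A) (hp : Injective p) : Injective A.col := by
  intro v w hvw
  by_contra hne
  obtain ⟨_, ⟨φ, rfl⟩, hφ⟩ := exists_mem_affineValues_apply_ne (hp.ne hne)
  obtain ⟨c, hc⟩ := h.exists_sum_eq φ
  have hA (u : U) : A u v = A u w := congrFun hvw u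
  exact hφ (by simp only [Function.comp_apply, hc, hA])

theorem submatrix {U' V' : Type*} [Fintype U'] (h : IsIntegralPresentation p α A) {e : U' → U}
    (he : range (A.map ((↑) : ℕ → ℝ)).row ⊆
      Submodule.span ℝ (range ((A.map ((↑) : ℕ → ℝ)).row ∘ e)))
    {f : V' → V} (hf : Surjective f) :
    IsIntegralPresentation (p ∘ f) (α ∘ e) (A.submatrix e f) where
  apply_eq _ _ := h.apply_eq _ _
  isIntegralOn _ := by
    rw [hf.range_comp]
    exact h.isIntegralOn _
  exists_sum_eq φ := by
    obtain ⟨c, hc⟩ := h.exists_sum_eq φ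
    have hφ : φ ∘ p = ∑ u, c u • (A.map ((↑) : ℕ → ℝ)).row u := by
      ext v
      simp [hc]
    have hmem : φ ∘ p ∈ Submodule.span ℝ (range ((A.map ((↑) : ℕ → ℝ)).row ∘ e)) := by
      rw [hφ]
      exact Submodule.sum_smul_mem _ _ fun u _ => he ⟨u, rfl⟩
    obtain ⟨c', hc'⟩ := (Submodule.mem_span_range_iff_exists_fun ℝ).1 hmem
    exact ⟨c', fun v => by simpa using (congrFun hc' (f v)).symm⟩

end IsIntegralPresentation

theorem exists_fin_range_subset_span_range_comp {ι K E : Type*} [Nonempty ι] [DivisionRing K]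
    [AddCommGroup E] [Module K E] [FiniteDimensional K E] (f : ι → E) {n : ℕ}
    (hn : finrank K (Submodule.span K (range f)) ≤ n) :
    ∃ e : Fin n → ι, range f ⊆ Submodule.span K (range (f ∘ e)) := by
  obtain ⟨t, ht, hspan, -⟩ := Submodule.exists_fun_fin_finrank_span_eq K (range f)
  choose e he using ht
  refine ⟨extend (Fin.castLE hn) e fun _ => Classical.arbitrary ι, ?_⟩
  refine Submodule.subset_span.trans (hspan.symm.le.trans (Submodule.span_mono ?_))
  rintro _ ⟨i, rfl⟩
  exact ⟨Fin.castLE hn i, by rw [Function.comp_apply, (Fin.castLE_injective hn).extend_apply, he]⟩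

end RankAndSeparation

section Pyramids

open Function Set

theorem LatticeIso.of_leftInverse {d e : ℕ} {P : Set (Fin d → ℝ)} {f : (Fin d → ℝ) →ᵃ[ℝ] Fin e → ℝ}
    {g : (Fin e → ℝ) →ᵃ[ℝ] Fin d → ℝ} (hgf : ∀ x ∈ affineSpan ℝ P, g (f x) = x)
    (hf : ∀ x ∈ affineSpan ℝ P, IsLatticePt (f x) ↔ IsLatticePt x) : LatticeIso P (f '' P) := by
  have hP : ∀ x ∈ P, g (f x) = x := fun x hx => hgf x (subset_affineSpan ℝ P hx)
  have himage {C : (Fin e → ℝ) → Prop} (h : ∀ x ∈ affineSpan ℝ P, C (f x)) :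
      ∀ y ∈ affineSpan ℝ (f '' P), C y := by
    rw [← AffineSubspace.map_span]
    rintro _ ⟨x, hx, rfl⟩
    exact h x hx
  refine ⟨f, g, rfl, ?_, hgf, himage fun x hx => by rw [hgf x hx],
    fun x hx => (hf x hx).2, himage fun x hx hfx => ?_⟩
  · rw [image_image, image_congr hP, image_id']
  · rw [hgf x hx]
    exact (hf x hx).1 hfx

/-- The linear equivalence appending a last coordinate. -/
def snocLinearEquiv (R : Type*) [CommSemiring R] (n : ℕ) :
    ((Fin n → R) × R) ≃ₗ[R] (Fin (n + 1) → R) where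
  toFun y := Fin.snoc (α := fun _ => R) y.1 y.2
  invFun y := (Fin.init y, y (Fin.last n))
  map_add' x y := by
    ext i
    refine Fin.lastCases ?_ (fun j => ?_) i <;> simp
  map_smul' c y := by
    ext i
    refine Fin.lastCases ?_ (fun j => ?_) i <;> simp
  left_inv y := by simp
  right_inv y := by simp

theorem isLatticePt_snoc {d : ℕ} {y : Fin d → ℝ} {t : ℝ} :
    IsLatticePt (Fin.snoc y t : Fin (d + 1) → ℝ) ↔ IsLatticePt y ∧ ∃ z : ℤ, t = z := by
  simp [IsLatticePt, Fin.forall_fin_succ']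

variable {V : Type*} {d : ℕ} {p : V → Fin d → ℝ}

theorem pyramidOver_convexHull (S : Set (Fin d → ℝ)) :
    pyramidOver (convexHull ℝ S) = convexHull ℝ
      ((fun x => snocLinearEquiv ℝ d (x, 0)) '' S ∪ {snocLinearEquiv ℝ d (0, 1)}) := by
  have h := ((snocLinearEquiv ℝ d).toLinearMap.comp
    (LinearMap.inl ℝ (Fin d → ℝ) ℝ)).image_convexHull S
  exact (congrArg (fun T => convexHull ℝ (T ∪ _)) h).trans (convexHull_convexHull_union_left _ _)

-- The shear `x ↦ (x - α x • p w, α x)` puts the facet `α = 0` at height `0` and `p w` at `(0, 1)`.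
theorem latticeIso_pyramidOver (hp : ∀ v, IsLatticePt (p v)) {α : (Fin d → ℝ) →ᵃ[ℝ] ℝ}
    (hα : IsIntegralOn (convexHull ℝ (range p)) α) {w : V} (hw : α (p w) = 1)
    (h0 : ∀ v, v ≠ w → α (p v) = 0) :
    LatticeIso (convexHull ℝ (range p)) (pyramidOver (convexHull ℝ (p '' {w}ᶜ))) := by
  let f : (Fin d → ℝ) →ᵃ[ℝ] Fin (d + 1) → ℝ := (snocLinearEquiv ℝ d).toLinearMap.toAffineMap.comp
    ((AffineMap.id ℝ _ - (LinearMap.toSpanSingleton ℝ _ (p w)).toAffineMap.comp α).prod α)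
  let g : (Fin (d + 1) → ℝ) →ₗ[ℝ] Fin d → ℝ :=
    (LinearMap.fst ℝ _ ℝ + (LinearMap.toSpanSingleton ℝ _ (p w)).comp (LinearMap.snd ℝ _ ℝ)).comp
      (snocLinearEquiv ℝ d).symm.toLinearMap
  have hf (x : Fin d → ℝ) : f x = snocLinearEquiv ℝ d (x - α x • p w, α x) := rfl
  have hgf (x : Fin d → ℝ) : g (f x) = x := by simp [hf, g]
  have hfp (v : V) (hv : v ≠ w) : f (p v) = snocLinearEquiv ℝ d (p v, 0) := by simp [hf, h0 v hv]
  have himage : f '' convexHull ℝ (range p) = pyramidOver (convexHull ℝ (p '' {w}ᶜ)) := by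
    rw [pyramidOver_convexHull, AffineMap.image_convexHull, ← range_comp, ← image_univ,
      ← compl_union_self {w}, image_union, image_singleton, image_image,
      image_congr (s := {w}ᶜ) (f := f ∘ p) hfp]
    simp [hf, hw]
  rw [← himage]
  refine LatticeIso.of_leftInverse (g := g.toAffineMap) (fun x _ => hgf x) fun x hx => ?_
  refine (isLatticePt_snoc (y := x - α x • p w) (t := α x)).trans ⟨?_, fun hxl => ?_⟩
  · rintro ⟨hxl, z, hz⟩
    have := hxl.add ((hp w).zsmul z)
    rwa [hz, Int.cast_smul_eq_zsmul, sub_add_cancel] at this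
  · obtain ⟨z, hz⟩ := hα x hx hxl
    refine ⟨?_, z, hz⟩
    rw [hz, Int.cast_smul_eq_zsmul]
    exact hxl.sub ((hp w).zsmul z)

theorem isLatticePyramid_of_apply_eq_single [Finite V] [DecidableEq V] (hp : ∀ v, IsLatticePt (p v))
    {α : (Fin d → ℝ) →ᵃ[ℝ] ℝ} (hα : IsIntegralOn (convexHull ℝ (range p)) α) {w : V}
    (hαp : α ∘ p = Pi.single w 1) : IsLatticePyramid (convexHull ℝ (range p)) := by
  rcases ({w}ᶜ : Set V).eq_empty_or_nonempty with hV | hV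
  · refine Or.inl ⟨p w, hp w, ?_⟩
    rw [← image_univ, ← compl_union_self {w}, hV, empty_union, image_singleton,
      convexHull_singleton]
  · refine Or.inr ⟨d, _, ⟨(toFinite (p '' {w}ᶜ)).toFinset, by simpa using hV, ?_, by simp⟩,
      latticeIso_pyramidOver hp hα ((congrFun hαp w).trans (Pi.single_eq_same w 1)) fun v hv =>
        (congrFun hαp v).trans (Pi.single_eq_of_ne hv 1)⟩
    simp only [Finite.mem_toFinset]
    rintro _ ⟨v, -, rfl⟩
    exact hp v

end Pyramids

section BoundedPresentations

open Function Set Matrix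

theorem polyDim_add_one_le {d r : ℕ} {P : Set (Fin d → ℝ)} (hr : 0 < r)
    (hP : IsReflexivePolytope ((r : ℝ) • P)) : polyDim P + 1 ≤ r + polyDeg P := by
  obtain ⟨x, hx, hxl, -⟩ := hP
  have hcodeg : polyCodeg P ≤ r := Nat.sInf_le ⟨hr, fun h => h x hx hxl⟩
  unfold polyDeg
  lia

theorem polyCodeg_pos {d r : ℕ} {P : Set (Fin d → ℝ)} (hr : 0 < r)
    (hP : IsReflexivePolytope ((r : ℝ) • P)) : 0 < polyCodeg P := by
  obtain ⟨x, hx, hxl, -⟩ := hP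
  exact (Nat.sInf_mem (s := {r : ℕ | 0 < r ∧ ¬ IsHollow ((r : ℝ) • P)})
    ⟨r, hr, fun h => h x hx hxl⟩).1

theorem exists_ne_of_polyDim_pos {V : Type*} {d : ℕ} {p : V → Fin d → ℝ}
    (h : 0 < polyDim (convexHull ℝ (range p))) : ∃ v w, p v ≠ p w := by
  contrapose! h
  rw [polyDim, affineSpan_convexHull, direction_affineSpan,
    vectorSpan_of_subsingleton ℝ <| by
      rintro _ ⟨v, rfl⟩ _ ⟨w, rfl⟩
      exact h v w, finrank_bot]

theorem exists_isIntegralPresentation_of_isGorenstein {V : Type*} [Fintype V] {d : ℕ}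
    {p : V → Fin d → ℝ} (hp : ∀ v, IsLatticePt (p v)) (hinj : Injective p)
    (hG : IsGorenstein (convexHull ℝ (range p))) {s : ℕ} (hs : 0 < s)
    (hdeg : polyDeg (convexHull ℝ (range p)) = s)
    (hpyr : ¬ IsLatticePyramid (convexHull ℝ (range p))) :
    ∃ (U : Type) (_ : Fintype U) (α : U → (Fin d → ℝ) →ᵃ[ℝ] ℝ) (A : Matrix U V ℕ) (r : ℕ)
      (m : U → ℝ) (l : V → ℝ), IsIntegralPresentation p α A ∧ IsGorensteinMatrix A r m l ∧
      r ≤ 11 * s ∧ (A.map ((↑) : ℕ → ℝ)).rank ≤ 12 * s := by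
  classical
  obtain ⟨r, hr, hP⟩ := hG
  have hdim := polyDim_add_one_le hr hP
  obtain ⟨v₁, v₂, hv⟩ : ∃ v w, p v ≠ p w := exists_ne_of_polyDim_pos <| by
    have := polyCodeg_pos hr hP
    unfold polyDeg at hdeg
    lia
  obtain ⟨U, _, α, A, m, l, hα, hA⟩ := hP.exists_isIntegralPresentation hp hv hr.ne'
  have hrank : (A.map ((↑) : ℕ → ℝ)).rank ≤ r + s := hα.rank_le.trans (hdeg ▸ hdim)
  have hr11 : r ≤ 11 * s := hA.le_eleven_mul hrank (hα.col_injective hinj) fun u w huw =>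
    hpyr <| isLatticePyramid_of_apply_eq_single hp (hα.isIntegralOn u) (w := w) <| by
      ext v
      rw [Function.comp_apply, hα.apply_eq, ← Matrix.row_apply A, huw]
      simp [Pi.single_apply]
  exact ⟨U, ‹_›, α, A, r, m, l, hα, hA, hr11, by lia⟩

theorem exists_bounded_isIntegralPresentation {s : ℕ} (hs : 0 < s) :
    ∃ L N B : ℕ, ∀ {d : ℕ} {P : Set (Fin d → ℝ)}, IsLatticePolytope P → IsGorenstein P →
      polyDeg P = s → ¬ IsLatticePyramid P →
      ∃ (p : Fin N → Fin d → ℝ) (α : Fin L → (Fin d → ℝ) →ᵃ[ℝ] ℝ) (A : Matrix (Fin L) (Fin N) ℕ),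
        (∀ v, IsLatticePt (p v)) ∧ convexHull ℝ (range p) = P ∧ IsIntegralPresentation p α A ∧
          ∀ u v, A u v ≤ B := by
  obtain ⟨B, hB⟩ := IsGorensteinMatrix.exists_nat_forall_apply_le (12 * s) (11 * s)
  refine ⟨12 * s, (B + 1) ^ (12 * s), B, fun {d P} hP hG hdeg hpyr => ?_⟩
  obtain ⟨S, hS, hSl, rfl⟩ := hP
  have hrange : range ((↑) : S → Fin d → ℝ) = S := Subtype.range_coe
  have hp (v : S) : IsLatticePt (v : Fin d → ℝ) := hSl v v.2
  have : Nonempty S := hS.coe_sort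
  rw [← hrange] at hG hdeg hpyr ⊢
  obtain ⟨U, _, α, A, r, m, l, hα, hA, hr11, hrank⟩ :=
    exists_isIntegralPresentation_of_isGorenstein hp Subtype.val_injective hG hs hdeg hpyr
  have hAB := hB hA hrank hr11
  have : Nonempty U := let ⟨u, _⟩ := hA.row.exists_pos (Classical.arbitrary S); ⟨u⟩
  obtain ⟨e, he⟩ := exists_fin_range_subset_span_range_comp (K := ℝ) (A.map ((↑) : ℕ → ℝ)).row
    (Matrix.rank_eq_finrank_span_row (A.map ((↑) : ℕ → ℝ)) ▸ hrank)
  have hαe := hα.submatrix he surjective_id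
  have hcard : Fintype.card S ≤ Fintype.card (Fin ((B + 1) ^ (12 * s))) := by
    let c (v : S) (u : Fin (12 * s)) : Fin (B + 1) := ⟨A (e u) v, Nat.lt_succ_of_le (hAB _ _)⟩
    have hc : Injective c := fun v w hvw => hαe.col_injective Subtype.val_injective <|
      funext fun u => congrArg Fin.val (congrFun hvw u)
    simpa using Fintype.card_le_of_injective c hc
  obtain ⟨g⟩ := Embedding.nonempty_of_card_le hcard
  have hf : Surjective (invFun g) := invFun_surjective g.injective
  exact ⟨Subtype.val ∘ invFun g, α ∘ e, A.submatrix e (invFun g), fun v => hp _,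
    by rw [hf.range_comp], hα.submatrix he hf, fun u v => hAB _ _⟩

end BoundedPresentations

section LatticeValues

open Function Set Matrix

variable {U V : Type*} [Fintype V] {d : ℕ} {p : V → Fin d → ℝ} {A : Matrix U V ℕ}

theorem exists_weights_of_mem_affineSpan_range {K E : Type*} [Ring K] [Nontrivial K]
    [AddCommGroup E] [Module K E] {q : V → E} {x : E} (hx : x ∈ affineSpan K (range q)) :
    ∃ w : V → K, ∑ v, w v = 1 ∧ ∑ v, w v • q v = x := by
  obtain ⟨w, hw, rfl⟩ := eq_affineCombination_of_mem_affineSpan_of_fintype hx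
  exact ⟨w, hw, (Finset.univ.affineCombination_eq_linear_combination q w hw).symm⟩

/-- The values, on the lattice points of the affine hull of the configuration `p`, of affine
functionals having the values `A u v` on `p`. -/
def latticeValues (p : V → Fin d → ℝ) (A : Matrix U V ℕ) : Set (U → ℤ) :=
  {z | ∃ w : V → ℝ, ∑ v, w v = 1 ∧ IsLatticePt (∑ v, w v • p v) ∧
    ∀ u, ∑ v, w v * A u v = z u}

theorem isLatticePt_sum_zsmul (hp : ∀ v, IsLatticePt (p v)) (n : V → ℤ) :
    IsLatticePt (∑ v, n v • p v) := by
  choose a ha using hp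
  exact fun i => ⟨∑ v, n v * a v i, by simp [ha]⟩

theorem add_sum_mul_mem_latticeValues (hp : ∀ v, IsLatticePt (p v)) {z : U → ℤ}
    (hz : z ∈ latticeValues p A) {n : V → ℤ} (hn : ∑ v, n v = 0) :
    (fun u => z u + ∑ v, n v * A u v) ∈ latticeValues p A := by
  obtain ⟨w, hw, hwl, hwz⟩ := hz
  refine ⟨fun v => w v + n v, ?_, ?_, fun u => ?_⟩
  · rw [Finset.sum_add_distrib, hw, ← Int.cast_sum, hn, Int.cast_zero, add_zero]
  · simpa only [add_smul, Int.cast_smul_eq_zsmul, Finset.sum_add_distrib] using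
      hwl.add (isLatticePt_sum_zsmul hp n)
  · simp [add_mul, Finset.sum_add_distrib, hwz]

theorem exists_int_sum_eq_zero_abs_add_le {w : V → ℝ} (hw : ∑ v, w v = 1) :
    ∃ n : V → ℤ, ∑ v, n v = 0 ∧ ∀ v, |w v + n v| ≤ Fintype.card V + 1 := by
  classical
  rcases isEmpty_or_nonempty V with hV | ⟨⟨v₀⟩⟩
  · exact ⟨0, by simp, fun v => hV.elim v⟩
  have hfract : ∑ v, Int.fract (w v) = 1 - ∑ v, (⌊w v⌋ : ℝ) := by
    simp only [Int.fract, Finset.sum_sub_distrib, hw]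
  have hfract_le : ∑ v, Int.fract (w v) ≤ Fintype.card V := by
    simpa using Finset.sum_le_card_nsmul Finset.univ _ 1 fun v _ => (Int.fract_lt_one (w v)).le
  refine ⟨fun v => (Pi.single v₀ (∑ v, ⌊w v⌋) : V → ℤ) v - ⌊w v⌋, by simp, fun v => ?_⟩
  have h0 := Int.fract_nonneg (w v)
  have h1 := Int.fract_lt_one (w v)
  have hle := Finset.single_le_sum (fun v _ => Int.fract_nonneg (w v)) (Finset.mem_univ v)
  rw [Int.fract] at h0 h1 hle
  rw [abs_le]
  by_cases hv : v = v₀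
  · subst hv
    simp only [Pi.single_eq_same]
    push_cast
    constructor <;> linarith
  · simp only [Pi.single_eq_of_ne hv]
    push_cast
    constructor <;> linarith

theorem abs_sum_mul_le {B : ℕ} (hB : ∀ u v, A u v ≤ B) {w : V → ℝ} {C : ℝ} (hw : ∀ v, |w v| ≤ C)
    (u : U) : |∑ v, w v * A u v| ≤ Fintype.card V * (C * B) :=
  calc |∑ v, w v * A u v| ≤ ∑ v, |w v * A u v| := Finset.abs_sum_le_sum_abs _ _
    _ ≤ Fintype.card V • (C * B) := Finset.sum_le_card_nsmul _ _ _ fun v _ => by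
      rw [abs_mul, Nat.abs_cast]
      exact mul_le_mul (hw v) (Nat.cast_le.2 (hB u v)) (Nat.cast_nonneg _)
        ((abs_nonneg _).trans (hw v))
    _ = Fintype.card V * (C * B) := nsmul_eq_mul _ _

theorem exists_finite_forall_add_sum_mul_mem (U V : Type*) [Finite U] [Fintype V] (B : ℕ) :
    ∃ s : Set (U → ℤ), s.Finite ∧ ∀ {d : ℕ} {p : V → Fin d → ℝ} {A : Matrix U V ℕ},
      (∀ u v, A u v ≤ B) → ∀ z ∈ latticeValues p A,
        ∃ n : V → ℤ, ∑ v, n v = 0 ∧ (fun u => z u + ∑ v, n v * A u v) ∈ s := by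
  let M : ℤ := Fintype.card V * ((Fintype.card V + 1) * B)
  refine ⟨{z | ∀ u, z u ∈ Icc (-M) M}, Set.Finite.pi' fun _ => finite_Icc _ _,
    fun {d p A} hB z ⟨w, hw, _, hwz⟩ => ?_⟩
  obtain ⟨n, hn, hwn⟩ := exists_int_sum_eq_zero_abs_add_le hw
  refine ⟨n, hn, fun u => abs_le.1 ?_⟩
  have hle := abs_sum_mul_le hB hwn u
  simp only [add_mul, Finset.sum_add_distrib, hwz] at hle
  rw [← Int.cast_le (R := ℝ)]
  push_cast [M]
  linarith

theorem exists_finite_forall_latticeValues_subset (U V : Type*) [Finite U] [Fintype V] (B : ℕ) :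
    ∃ s : Set (U → ℤ), s.Finite ∧ ∀ {d e : ℕ} {p : V → Fin d → ℝ} {p' : V → Fin e → ℝ}
      {A : Matrix U V ℕ}, (∀ v, IsLatticePt (p v)) → (∀ v, IsLatticePt (p' v)) →
        (∀ u v, A u v ≤ B) → latticeValues p A ∩ s ⊆ latticeValues p' A →
          latticeValues p A ⊆ latticeValues p' A := by
  obtain ⟨s, hs, h⟩ := exists_finite_forall_add_sum_mul_mem U V B
  refine ⟨s, hs, fun hp hp' hB hsub z hz => ?_⟩
  obtain ⟨n, hn, hzn⟩ := h hB z hz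
  simpa using add_sum_mul_mem_latticeValues hp'
    (hsub ⟨add_sum_mul_mem_latticeValues hp hz hn, hzn⟩) (n := -n) (by simp [hn])

end LatticeValues

section Isomorphism

open Function Set Matrix

namespace IsIntegralPresentation

variable {U V : Type*} [Fintype U] {d e : ℕ} {p : V → Fin d → ℝ} {p' : V → Fin e → ℝ}
  {α : U → (Fin d → ℝ) →ᵃ[ℝ] ℝ} {α' : U → (Fin e → ℝ) →ᵃ[ℝ] ℝ} {A : Matrix U V ℕ}

theorem exists_coordinates (h : IsIntegralPresentation p α A) :
    ∃ c : Fin d → U → ℝ, ∀ v i, p v i = ∑ u, c i u * A u v := by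
  choose c hc using fun i => h.exists_sum_eq (LinearMap.proj i).toAffineMap
  exact ⟨c, fun v i => hc i v⟩

theorem exists_affineMap_apply_eq (h : IsIntegralPresentation p α A)
    (h' : IsIntegralPresentation p' α' A) :
    ∃ f : (Fin d → ℝ) →ᵃ[ℝ] Fin e → ℝ, ∀ v, f (p v) = p' v := by
  obtain ⟨c, hc⟩ := h'.exists_coordinates
  refine ⟨(Matrix.of c).mulVecLin.toAffineMap.comp (AffineMap.pi α), fun v => funext fun i => ?_⟩
  simp [hc, h.apply_eq, mulVec, dotProduct]

variable [Fintype V]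

theorem sum_smul_eq (h : IsIntegralPresentation p α A) {w w' : V → ℝ}
    (hw : ∀ u, ∑ v, w v * A u v = ∑ v, w' v * A u v) : ∑ v, w v • p v = ∑ v, w' v • p v := by
  obtain ⟨c, hc⟩ := h.exists_coordinates
  have hsum (w : V → ℝ) (i : Fin d) :
      (∑ v, w v • p v) i = ∑ u, c i u * ∑ v, w v * A u v := by
    simp only [Finset.sum_apply, Pi.smul_apply, smul_eq_mul, hc, Finset.mul_sum]
    rw [Finset.sum_comm]
    simp only [mul_left_comm]
  ext i
  simp only [hsum, hw]

theorem isLatticePt_sum_smul_iff (h : IsIntegralPresentation p α A) {w : V → ℝ}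
    (hw : ∑ v, w v = 1) : IsLatticePt (∑ v, w v • p v) ↔
      ∃ z ∈ latticeValues p A, ∀ u, ∑ v, w v * A u v = z u := by
  refine ⟨fun hl => ?_, ?_⟩
  · have hmem : ∑ v, w v • p v ∈ affineSpan ℝ (convexHull ℝ (range p)) := by
      rw [affineSpan_convexHull, ← Finset.univ.affineCombination_eq_linear_combination p w hw]
      exact affineCombination_mem_affineSpan hw p
    choose z hz using fun u => h.isIntegralOn u _ hmem hl
    have hwz (u : U) : ∑ v, w v * A u v = z u := by
      rw [← hz, affineMap_sum_smul (α u) p hw]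
      simp only [h.apply_eq, smul_eq_mul]
    exact ⟨z, ⟨w, hw, hl, hwz⟩, hwz⟩
  · rintro ⟨z, ⟨w', -, hl, hwz'⟩, hwz⟩
    rwa [h.sum_smul_eq fun u => (hwz u).trans (hwz' u).symm]

theorem latticeIso (h : IsIntegralPresentation p α A) (h' : IsIntegralPresentation p' α' A)
    (hpp' : latticeValues p A = latticeValues p' A) :
    LatticeIso (convexHull ℝ (range p)) (convexHull ℝ (range p')) := by
  obtain ⟨f, hf⟩ := h.exists_affineMap_apply_eq h'
  obtain ⟨g, hg⟩ := h'.exists_affineMap_apply_eq h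
  have himage : f '' convexHull ℝ (range p) = convexHull ℝ (range p') := by
    rw [f.image_convexHull, ← range_comp]
    exact congrArg _ (congrArg _ (funext hf))
  have hgf : EqOn (g.comp f) (AffineMap.id ℝ _) (affineSpan ℝ (range p)) :=
    AffineMap.eqOn_affineSpan <| by
      rintro _ ⟨v, rfl⟩
      simp [hf, hg]
  rw [← himage]
  refine LatticeIso.of_leftInverse (g := g) (by rwa [affineSpan_convexHull]) fun x hx => ?_
  rw [affineSpan_convexHull] at hx
  obtain ⟨w, hw, rfl⟩ := exists_weights_of_mem_affineSpan_range hx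
  rw [affineMap_sum_smul f p hw, h.isLatticePt_sum_smul_iff hw]
  simp only [hf]
  rw [h'.isLatticePt_sum_smul_iff hw, hpp']

end IsIntegralPresentation

end Isomorphism

section Representatives

open Function Set Matrix

theorem LatticeIso.trans {d e n : ℕ} {P : Set (Fin d → ℝ)} {Q : Set (Fin e → ℝ)}
    {R : Set (Fin n → ℝ)} (hPQ : LatticeIso P Q) (hQR : LatticeIso Q R) : LatticeIso P R := by
  obtain ⟨f, g, hfP, -, hgf, -, hf, hg⟩ := hPQ
  obtain ⟨f', g', hfQ, -, hgf', -, hf', hg'⟩ := hQR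
  have hmap {x : Fin d → ℝ} (hx : x ∈ affineSpan ℝ P) : f x ∈ affineSpan ℝ Q := by
    rw [← hfP, ← AffineSubspace.map_span]
    exact AffineSubspace.mem_map_of_mem f hx
  have hmap' {x : Fin e → ℝ} (hx : x ∈ affineSpan ℝ Q) : f' x ∈ affineSpan ℝ R := by
    rw [← hfQ, ← AffineSubspace.map_span]
    exact AffineSubspace.mem_map_of_mem f' hx
  have hleft (x : Fin d → ℝ) (hx : x ∈ affineSpan ℝ P) : (g.comp g') ((f'.comp f) x) = x := by
    simp [hgf' _ (hmap hx), hgf x hx]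
  rw [← hfQ, ← hfP, image_image]
  refine LatticeIso.of_leftInverse (f := f'.comp f) hleft fun x hx => ⟨fun h => ?_, fun h => ?_⟩
  · rw [← hleft x hx]
    refine hg _ ?_ (hg' _ (hmap' (hmap hx)) h)
    rw [AffineMap.comp_apply, hgf' _ (hmap hx)]
    exact hmap hx
  · exact hf' _ (hmap hx) (hf x hx h)

theorem LatticeIso.exists_of_le {d N : ℕ} (h : d ≤ N) (P : Set (Fin d → ℝ)) :
    ∃ Q : Set (Fin N → ℝ), LatticeIso P Q := by
  have hinj := Fin.castLE_injective h
  let f : (Fin d → ℝ) →ₗ[ℝ] Fin N → ℝ := ExtendByZero.linearMap ℝ (Fin.castLE h)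
  have hf (x : Fin d → ℝ) (i : Fin d) : f x (Fin.castLE h i) = x i :=
    hinj.extend_apply x (0 : Fin N → ℝ) i
  refine ⟨_, LatticeIso.of_leftInverse (f := f.toAffineMap)
    (g := (LinearMap.funLeft ℝ ℝ (Fin.castLE h)).toAffineMap)
    (fun x _ => funext (hf x)) fun x _ => ⟨fun hx i => hf x i ▸ hx _, fun hx j => ?_⟩⟩
  by_cases hj : ∃ i, Fin.castLE h i = j
  · obtain ⟨i, rfl⟩ := hj
    exact (hf x i).symm ▸ hx i
  · exact ⟨0, (extend_apply' x (0 : Fin N → ℝ) j hj).trans Int.cast_zero.symm⟩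

theorem exists_finite_latticeIso_representatives {C : Type*} [Finite C]
    (R : C → (d : ℕ) → Set (Fin d → ℝ) → Prop)
    (hR : ∀ (c : C) {d e : ℕ} {P : Set (Fin d → ℝ)} {Q : Set (Fin e → ℝ)}, R c d P → R c e Q →
      LatticeIso P Q) :
    ∃ (k N : ℕ) (Q : Fin k → Set (Fin N → ℝ)), ∀ {c : C} {d : ℕ} {P : Set (Fin d → ℝ)}, R c d P →
      ∃ i, LatticeIso P (Q i) := by
  have hrep (c : C) : ∃ (e : ℕ) (T : Set (Fin e → ℝ)), ∀ {d : ℕ} {P : Set (Fin d → ℝ)}, R c d P →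
      LatticeIso P T := by
    by_cases h : ∃ (e : ℕ) (T : Set (Fin e → ℝ)), R c e T
    · obtain ⟨e, T, hT⟩ := h
      exact ⟨e, T, fun hP => hR c hP hT⟩
    · exact ⟨0, ∅, fun hP => (h ⟨_, _, hP⟩).elim⟩
  choose e T hT using hrep
  obtain ⟨N, hN⟩ := (finite_range e).bddAbove
  choose Q hQ using fun c => LatticeIso.exists_of_le (hN ⟨c, rfl⟩) (T c)
  refine ⟨Nat.card C, N, Q ∘ (Finite.equivFin C).symm, fun {c d P} hP => ⟨Finite.equivFin C c, ?_⟩⟩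
  simpa using (hT c hP).trans (hQ c)

theorem exists_finite_latticeIso_of_isIntegralPresentation (U V : Type*) [Fintype U]
    [Finite V] (B : ℕ) : ∃ (k N : ℕ) (Q : Fin k → Set (Fin N → ℝ)), ∀ {d : ℕ} {p : V → Fin d → ℝ}
      {α : U → (Fin d → ℝ) →ᵃ[ℝ] ℝ} {A : Matrix U V ℕ}, (∀ v, IsLatticePt (p v)) →
        IsIntegralPresentation p α A → (∀ u v, A u v ≤ B) →
          ∃ i, LatticeIso (convexHull ℝ (range p)) (Q i) := by
  cases nonempty_fintype V
  obtain ⟨s, hs, hsub⟩ := exists_finite_forall_latticeValues_subset U V B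
  let K : Set (Matrix U V ℕ × Set (U → ℤ)) := {A | ∀ u v, A u v ≤ B} ×ˢ {Λ | Λ ⊆ s}
  have hK : K.Finite := (Set.Finite.pi' fun _ => Set.Finite.pi' fun _ => finite_Iic B).prod
    hs.finite_subsets
  have := hK.to_subtype
  obtain ⟨k, N, Q, hQ⟩ := exists_finite_latticeIso_representatives (fun (c : K) d P =>
    ∃ (p : V → Fin d → ℝ) (α : U → (Fin d → ℝ) →ᵃ[ℝ] ℝ), (∀ v, IsLatticePt (p v)) ∧
      IsIntegralPresentation p α c.1.1 ∧ latticeValues p c.1.1 ∩ s = c.1.2 ∧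
      convexHull ℝ (range p) = P) <| by
    rintro ⟨⟨A, Λ⟩, hA, _⟩ d e _ _ ⟨p, α, hp, hα, hΛ, rfl⟩ ⟨p', α', hp', hα', hΛ', rfl⟩
    exact hα.latticeIso hα' <| Subset.antisymm
      (hsub hp hp' hA ((hΛ.trans hΛ'.symm).subset.trans inter_subset_left))
      (hsub hp' hp hA ((hΛ'.trans hΛ.symm).subset.trans inter_subset_left))
  exact ⟨k, N, Q, fun {d p α A} hp hα hA =>
    hQ (c := ⟨(A, latticeValues p A ∩ s), hA, inter_subset_right⟩) ⟨p, α, hp, hα, rfl, rfl⟩⟩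

end Representatives

/-- For every fixed positive integer `s` there are, up to isomorphism, only finitely
many Gorenstein polytopes of degree `s` (of arbitrary dimension) that are not lattice
pyramids: there is a finite family of polytopes containing a representative of every
isomorphism class. -/
theorem stmt16 (s : ℕ) (hs : 0 < s) :
    ∃ (k N : ℕ) (Q : Fin k → Set (Fin N → ℝ)),
      ∀ (d : ℕ) (P : Set (Fin d → ℝ)), IsLatticePolytope P → IsGorenstein P →
        polyDeg P = s → ¬ IsLatticePyramid P → ∃ i, LatticeIso P (Q i) := by
  obtain ⟨L, N, B, hbounded⟩ := exists_bounded_isIntegralPresentation hs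
  obtain ⟨k, M, Q, hQ⟩ := exists_finite_latticeIso_of_isIntegralPresentation (Fin L) (Fin N) B
  refine ⟨k, M, Q, fun d P hP hG hdeg hpyr => ?_⟩
  obtain ⟨p, α, A, hp, rfl, hα, hA⟩ := hbounded hP hG hdeg hpyr
  exact hQ hp hα hA
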